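/- Let ρ_ABC be a positive definite density matrix on the tensor product of finite-dimensional complex Hilbert spaces H_A ⊗ H_B ⊗ H_C. If ρ_ABC is a short quantum Markov chain A−C−B, then I_α(A;B|C)_ρ = 0 and Ĩ_α(A;B|C)_ρ = 0 for all α ∈ (0,1) ∪ (1,∞). Conversely, if I_α(A;B|C)_ρ = 0 for some α ∈ (0,1) ∪ (1,2), or if Ĩ_α(A;B|C)_ρ = 0 for some α ∈ (1/2,1) ∪ (1,∞), then ρ_ABC is a short quantum Markov chain A−C−B. -/

import Mathlib

open scoped ComplexOrder Matrix

/-- Real power of a Hermitian matrix, taken on its support: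
for `A = ∑ᵢ λᵢ |i⟩⟨i|`, `mpow A t = ∑_{i : λᵢ ≠ 0} λᵢ^t |i⟩⟨i|`.
(For non-Hermitian input we return the junk value `0`.) -/
noncomputable def mpow {n : Type*} [Fintype n] [DecidableEq n]
    (A : Matrix n n ℂ) (t : ℝ) : Matrix n n ℂ :=
  if h : A.IsHermitian then
    (h.eigenvectorUnitary : Matrix n n ℂ) *
      Matrix.diagonal (fun i => ((if h.eigenvalues i = 0 then (0:ℝ)
        else (h.eigenvalues i) ^ t) : ℂ)) *
      (star h.eigenvectorUnitary : Matrix n n ℂ)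
  else 0

/-- The reduced matrix `ρ_AC` of a tripartite matrix, viewed as the operator
`ρ_AC ⊗ I_B` on the full space. -/
noncomputable def redAC {dA dB dC : ℕ}
    (ρ : Matrix (Fin dA × Fin dB × Fin dC) (Fin dA × Fin dB × Fin dC) ℂ) :
    Matrix (Fin dA × Fin dB × Fin dC) (Fin dA × Fin dB × Fin dC) ℂ :=
  fun x y => (if x.2.1 = y.2.1 then (1:ℂ) else 0) *
    ∑ m : Fin dB, ρ (x.1, m, x.2.2) (y.1, m, y.2.2)

/-- The reduced matrix `ρ_BC` of a tripartite matrix, viewed as the operator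
`I_A ⊗ ρ_BC` on the full space. -/
noncomputable def redBC {dA dB dC : ℕ}
    (ρ : Matrix (Fin dA × Fin dB × Fin dC) (Fin dA × Fin dB × Fin dC) ℂ) :
    Matrix (Fin dA × Fin dB × Fin dC) (Fin dA × Fin dB × Fin dC) ℂ :=
  fun x y => (if x.1 = y.1 then (1:ℂ) else 0) * ∑ m : Fin dA, ρ (m, x.2) (m, y.2)

/-- The reduced matrix `ρ_C` of a tripartite matrix, viewed as the operator
`I_A ⊗ I_B ⊗ ρ_C` on the full space. -/
noncomputable def redC {dA dB dC : ℕ}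
    (ρ : Matrix (Fin dA × Fin dB × Fin dC) (Fin dA × Fin dB × Fin dC) ℂ) :
    Matrix (Fin dA × Fin dB × Fin dC) (Fin dA × Fin dB × Fin dC) ℂ :=
  fun x y => (if x.1 = y.1 then (1:ℂ) else 0) * (if x.2.1 = y.2.1 then (1:ℂ) else 0) *
    ∑ m : Fin dA, ∑ l : Fin dB, ρ (m, l, x.2.2) (m, l, y.2.2)

/-- The Schatten-type functional `‖X‖_β = (Tr{(X†X)^{β/2}})^{1/β}`. -/
noncomputable def mnorm {n : Type*} [Fintype n] [DecidableEq n]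
    (X : Matrix n n ℂ) (β : ℝ) : ℝ :=
  ((mpow (Xᴴ * X) (β/2)).trace.re) ^ β⁻¹

/-- The Rényi conditional mutual information `I_α(A;B|C)_ρ`. -/
noncomputable def IRenyi {dA dB dC : ℕ} (α : ℝ)
    (ρ : Matrix (Fin dA × Fin dB × Fin dC) (Fin dA × Fin dB × Fin dC) ℂ) : ℝ :=
  (α - 1)⁻¹ * Real.log
    ((mpow ρ α * mpow (redAC ρ) ((1 - α)/2) * mpow (redC ρ) ((α - 1)/2) *
      mpow (redBC ρ) (1 - α) * mpow (redC ρ) ((α - 1)/2) *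
      mpow (redAC ρ) ((1 - α)/2)).trace.re)

/-- The sandwiched Rényi conditional mutual information `Ĩ_α(A;B|C)_ρ`. -/
noncomputable def ITilde {dA dB dC : ℕ} (α : ℝ)
    (ρ : Matrix (Fin dA × Fin dB × Fin dC) (Fin dA × Fin dB × Fin dC) ℂ) : ℝ :=
  (2*α/(α - 1)) * Real.log (mnorm
    (mpow ρ (1/2) * mpow (redAC ρ) ((1 - α)/(2*α)) * mpow (redC ρ) ((α - 1)/(2*α)) *
      mpow (redBC ρ) ((1 - α)/(2*α))) (2*α))

/-- `ρ_ABC` is a short quantum Markov chain `A−C−B` if it is recovered by the Petz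
recovery channel acting on `C` alone:
`ρ_ABC = ρ_AC^{1/2} ρ_C^{−1/2} ρ_BC ρ_C^{−1/2} ρ_AC^{1/2}`. -/
def IsShortMarkov {dA dB dC : ℕ}
    (ρ : Matrix (Fin dA × Fin dB × Fin dC) (Fin dA × Fin dB × Fin dC) ℂ) : Prop :=
  ρ = mpow (redAC ρ) (1/2) * mpow (redC ρ) (-(1/2)) * redBC ρ *
        mpow (redC ρ) (-(1/2)) * mpow (redAC ρ) (1/2)

/-! Let `Δ : Z ↦ L Z R⁻¹` be the relative modular operator of `L = ρ_BC` and `R = ρ`, and `Δ₀`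
that of their marginals `L₀ = ρ_C` and `R₀ = ρ_AC` on the algebra of `A ⊗ C`. The map
`V Z = Z R₀^{-1/2} R^{1/2}` is an isometry with `V* Δ V = Δ₀`, so Jensen's inequality compares
the forms of `f(Δ)` at `V ξ` and of `f(Δ₀)` at `ξ`. Evaluated at `ξ = L₀^{-t} R₀^{t + 1/2}`, the
form of `Δ^{2t}` is the trace defining `I_α` for `t = (1 - α) / 2`, and that of `Δ₀^{2t}` is `1`.
By the Stieltjes representation of `x ↦ x^{2t}`, equality at one exponent forces equality for every
resolvent. The Jensen gap of a resolvent is a positive form of `(Δ + s)⁻¹ V ξ - V (Δ₀ + s)⁻¹ ξ`, so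
`V` then intertwines all powers of `Δ₀` and `Δ` at `ξ`, which says `ρ^u = ρ_AC^u ρ_C^{-u} ρ_BC^u`
for every `u`, in particular that `ρ` is a Markov chain.

For a Markov chain, a second isometry `J` with `J* Δ⁻¹ J = Δ₀⁻¹` agrees with `V` at one vector, and
bounds the resolvent forms from the other side; this gives the same factorization of all powers of
`ρ`, for which both informations vanish. A vanishing `Ĩ_α` is reduced to the trace inequality for
`t = (1 - α) / (2α)` by Young's inequality `tr (R^{1-w} B^w) ≤ 1` for `w ≤ 1`, reversed for
`w ≥ 1`. -/

section RealPowers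

open scoped MatrixOrder

variable {m n : Type*} [Fintype m] [DecidableEq m] [Fintype n] [DecidableEq n]

theorem continuousOn_spectrum_matrix (f : ℝ → ℝ) (A : Matrix n n ℂ) :
    ContinuousOn f (spectrum ℝ A) :=
  Matrix.finite_real_spectrum.continuousOn f

theorem cfc_eq_eigenvectorUnitary_conj {A : Matrix n n ℂ} (hA : A.IsHermitian) (f : ℝ → ℝ) :
    cfc f A = (hA.eigenvectorUnitary : Matrix n n ℂ) *
      Matrix.diagonal (fun i => (f (hA.eigenvalues i) : ℂ)) *
      (hA.eigenvectorUnitary : Matrix n n ℂ)ᴴ := by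
  rw [hA.cfc_eq, Matrix.IsHermitian.cfc, Unitary.conjStarAlgAut_apply]
  rfl

theorem mpow_eq_cfc {A : Matrix n n ℂ} (hA : A.PosDef) (t : ℝ) :
    mpow A t = cfc (fun x : ℝ => x ^ t) A := by
  rw [cfc_eq_eigenvectorUnitary_conj hA.1, mpow, dif_pos hA.1]
  congr 3
  ext i
  have hi := hA.eigenvalues_pos i
  have hpow : (hA.1.eigenvalues i : ℂ) ^ t = ((hA.1.eigenvalues i ^ t : ℝ) : ℂ) :=
    CFC.rpow_algebraMap (A := ℂ) (x := ⟨_, hi.le⟩) (y := t)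
  simp [hi.ne', hpow]

theorem mpow_eq_rpow {A : Matrix n n ℂ} (hA : A.PosDef) (t : ℝ) : mpow A t = A ^ t :=
  (mpow_eq_cfc hA t).trans (CFC.rpow_eq_cfc_real hA.posSemidef.nonneg).symm

theorem posDef_mpow {A : Matrix n n ℂ} (hA : A.PosDef) (t : ℝ) : (mpow A t).PosDef := by
  rw [mpow_eq_rpow hA, ← Matrix.isStrictlyPositive_iff_posDef]
  exact hA.isStrictlyPositive.rpow A t

theorem conjTranspose_mpow {A : Matrix n n ℂ} (hA : A.PosDef) (t : ℝ) :
    (mpow A t)ᴴ = mpow A t :=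
  (posDef_mpow hA t).1

theorem mpow_zero {A : Matrix n n ℂ} (hA : A.PosDef) : mpow A 0 = 1 := by
  rw [mpow_eq_rpow hA, CFC.rpow_zero A hA.posSemidef.nonneg]

theorem mpow_one {A : Matrix n n ℂ} (hA : A.PosDef) : mpow A 1 = A := by
  rw [mpow_eq_rpow hA, CFC.rpow_one A hA.posSemidef.nonneg]

theorem mpow_mul_mpow {A : Matrix n n ℂ} (hA : A.PosDef) (s t : ℝ) :
    mpow A s * mpow A t = mpow A (s + t) := by
  simp only [mpow_eq_rpow hA, CFC.rpow_add hA.isUnit]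

theorem mpow_mul_mpow_neg {A : Matrix n n ℂ} (hA : A.PosDef) (t : ℝ) :
    mpow A t * mpow A (-t) = 1 := by
  rw [mpow_mul_mpow hA, add_neg_cancel, mpow_zero hA]

theorem mpow_neg_mul_mpow {A : Matrix n n ℂ} (hA : A.PosDef) (t : ℝ) :
    mpow A (-t) * mpow A t = 1 := by
  rw [mpow_mul_mpow hA, neg_add_cancel, mpow_zero hA]

theorem mpow_mpow {A : Matrix n n ℂ} (hA : A.PosDef) (s t : ℝ) :
    mpow (mpow A s) t = mpow A (s * t) := by
  rcases eq_or_ne s 0 with rfl | hs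
  · rw [mpow_zero hA, mpow_eq_rpow Matrix.PosDef.one, CFC.one_rpow, zero_mul, mpow_zero hA]
  · rw [mpow_eq_rpow (posDef_mpow hA s), mpow_eq_rpow hA, mpow_eq_rpow hA,
      CFC.rpow_rpow A s t hs hA.isStrictlyPositive]

theorem posDef_map (φ : Matrix m m ℂ →⋆ₐ[ℂ] Matrix n n ℂ) {A : Matrix m m ℂ} (hA : A.PosDef) :
    (φ A).PosDef := by
  rw [← Matrix.isStrictlyPositive_iff_posDef]
  exact ⟨map_nonneg φ hA.posSemidef.nonneg, hA.isUnit.map φ⟩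

theorem map_mpow (φ : Matrix m m ℂ →⋆ₐ[ℂ] Matrix n n ℂ) {A : Matrix m m ℂ} (hA : A.PosDef)
    (t : ℝ) : φ (mpow A t) = mpow (φ A) t := by
  have hφ : Continuous φ := φ.toAlgHom.toLinearMap.continuous_of_finiteDimensional
  rw [mpow_eq_cfc hA, mpow_eq_cfc (posDef_map φ hA)]
  exact StarAlgHom.map_cfc (S := ℂ) φ _ A (continuousOn_spectrum_matrix _ A) hφ hA.1
    (posDef_map φ hA).1

theorem eigenvectorUnitary_conjTranspose_mul_cfc {A : Matrix n n ℂ} (hA : A.IsHermitian)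
    (f : ℝ → ℝ) :
    (hA.eigenvectorUnitary : Matrix n n ℂ)ᴴ * cfc f A =
      Matrix.diagonal (fun i => (f (hA.eigenvalues i) : ℂ)) *
        (hA.eigenvectorUnitary : Matrix n n ℂ)ᴴ := by
  have hU : (hA.eigenvectorUnitary : Matrix n n ℂ)ᴴ * hA.eigenvectorUnitary = 1 :=
    Unitary.coe_star_mul_self _
  rw [cfc_eq_eigenvectorUnitary_conj hA, ← mul_assoc, ← mul_assoc, hU, one_mul]

theorem cfc_mul_eigenvectorUnitary {A : Matrix n n ℂ} (hA : A.IsHermitian) (f : ℝ → ℝ) :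
    cfc f A * hA.eigenvectorUnitary = (hA.eigenvectorUnitary : Matrix n n ℂ) *
      Matrix.diagonal (fun i => (f (hA.eigenvalues i) : ℂ)) := by
  have hU : (hA.eigenvectorUnitary : Matrix n n ℂ)ᴴ * hA.eigenvectorUnitary = 1 :=
    Unitary.coe_star_mul_self _
  rw [cfc_eq_eigenvectorUnitary_conj hA, mul_assoc, hU, mul_one]

theorem cfc_mul_eq_mul_diagonal {A : Matrix n n ℂ} (hA : A.IsHermitian) {X : Matrix n m ℂ}
    {d : m → ℝ} (h : A * X = X * Matrix.diagonal (fun j => (d j : ℂ))) (f : ℝ → ℝ) :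
    cfc f A * X = X * Matrix.diagonal (fun j => (f (d j) : ℂ)) := by
  let U : Matrix n n ℂ := hA.eigenvectorUnitary
  have hU : U * Uᴴ = 1 := Unitary.coe_mul_star_self hA.eigenvectorUnitary
  have hentry (g : ℝ → ℝ) (i j) :
      (Uᴴ * (cfc g A * X)) i j = g (hA.eigenvalues i) * (Uᴴ * X) i j := by
    rw [← Matrix.mul_assoc, eigenvectorUnitary_conjTranspose_mul_cfc, Matrix.mul_assoc,
      Matrix.diagonal_mul]
  have hcoord (i j) : (hA.eigenvalues i : ℂ) * (Uᴴ * X) i j = d j * (Uᴴ * X) i j := by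
    rw [← hentry fun x => x, cfc_id' ℝ A hA.isSelfAdjoint, h, ← Matrix.mul_assoc,
      Matrix.mul_diagonal, mul_comm]
  suffices Uᴴ * (cfc f A * X) = Uᴴ * (X * Matrix.diagonal (fun j => (f (d j) : ℂ))) by
    simpa only [← Matrix.mul_assoc, hU, Matrix.one_mul] using congr_arg (U * ·) this
  ext i j
  rw [hentry, ← Matrix.mul_assoc, Matrix.mul_diagonal, mul_comm]
  rcases eq_or_ne ((Uᴴ * X) i j) 0 with h0 | h0
  · rw [h0, zero_mul, zero_mul]
  · rw [show hA.eigenvalues i = d j by exact_mod_cast mul_right_cancel₀ h0 (hcoord i j)]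

theorem mpow_eq_of_mul_eq_mul_diagonal {A B X : Matrix n n ℂ} {d : n → ℝ} {t : ℝ} (hA : A.PosDef)
    (hX : IsUnit X) (hAX : A * X = X * Matrix.diagonal (fun j => (d j : ℂ)))
    (hBX : B * X = X * Matrix.diagonal (fun j => ((d j ^ t : ℝ) : ℂ))) : mpow A t = B := by
  refine hX.mul_right_cancel ?_
  rw [mpow_eq_cfc hA, cfc_mul_eq_mul_diagonal hA.1 hAX, hBX]

theorem transpose_mpow {A : Matrix n n ℂ} (hA : A.PosDef) (t : ℝ) :
    (mpow A t)ᵀ = mpow Aᵀ t := by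
  have hcfc (f : ℝ → ℝ) :=
    congr_arg Matrix.transpose (eigenvectorUnitary_conjTranspose_mul_cfc hA.1 f)
  simp only [Matrix.transpose_mul, Matrix.diagonal_transpose] at hcfc
  have hU : IsUnit ((hA.1.eigenvectorUnitary : Matrix n n ℂ)ᴴᵀ) :=
    (Matrix.isUnit_transpose _).2 (Unitary.isUnit_coe (U := star hA.1.eigenvectorUnitary))
  refine (mpow_eq_of_mul_eq_mul_diagonal (d := hA.1.eigenvalues) hA.transpose hU ?_ ?_).symm
  · simpa only [cfc_id' ℝ A hA.1.isSelfAdjoint] using hcfc fun x => x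
  · rw [mpow_eq_cfc hA]
    exact hcfc (· ^ t)

open scoped Kronecker in
theorem mpow_kronecker {A : Matrix m m ℂ} {B : Matrix n n ℂ} (hA : A.PosDef) (hB : B.PosDef)
    (t : ℝ) : mpow (A ⊗ₖ B) t = mpow A t ⊗ₖ mpow B t := by
  let d (i : m × n) : ℝ := hA.1.eigenvalues i.1 * hB.1.eigenvalues i.2
  have hcfc (f : ℝ → ℝ) := congr_arg₂ (· ⊗ₖ ·) (cfc_mul_eigenvectorUnitary hA.1 f)
    (cfc_mul_eigenvectorUnitary hB.1 f)
  simp only [Matrix.mul_kronecker_mul, Matrix.diagonal_kronecker_diagonal,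
    ← Complex.ofReal_mul] at hcfc
  have hU := Matrix.IsUnit.kronecker (Unitary.isUnit_coe (U := hA.1.eigenvectorUnitary))
    (Unitary.isUnit_coe (U := hB.1.eigenvectorUnitary))
  refine mpow_eq_of_mul_eq_mul_diagonal (d := d) (hA.kronecker hB) hU ?_ ?_
  · simpa only [cfc_id' ℝ A hA.1.isSelfAdjoint, cfc_id' ℝ B hB.1.isSelfAdjoint]
      using hcfc fun x => x
  · simpa only [mpow_eq_cfc hA, mpow_eq_cfc hB, d,
      Real.mul_rpow (hA.eigenvalues_pos _).le (hB.eigenvalues_pos _).le] using hcfc (· ^ t)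

end RealPowers

section StieltjesRigidity

open MeasureTheory Real

variable {κ : Type*} [Fintype κ] {c x : κ → ℝ} {p : ℝ}

theorem eqOn_zero_of_setIntegral_Ioi_nonpos {f : ℝ → ℝ} (hf : ContinuousOn f (Set.Ioi 0))
    (hfi : IntegrableOn f (Set.Ioi 0)) (hf0 : ∀ s, 0 < s → 0 ≤ f s)
    (hint : ∫ s in Set.Ioi 0, f s ≤ 0) : Set.EqOn f 0 (Set.Ioi 0) := by
  have hae : 0 ≤ᵐ[volume.restrict (Set.Ioi (0 : ℝ))] f :=
    (ae_restrict_iff' measurableSet_Ioi).mpr (Filter.Eventually.of_forall hf0)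
  have h0 : ∫ s in Set.Ioi 0, f s = 0 := le_antisymm hint (integral_nonneg_of_ae hae)
  exact Measure.eqOn_open_of_ae_eq ((integral_eq_zero_iff_of_nonneg_ae hae hfi).mp h0) isOpen_Ioi
    hf continuousOn_const

theorem sum_mul_rpowIntegrand₀₁_eq_zero (hp : p ∈ Set.Ioo 0 1) (hx : ∀ k, 0 < x k)
    (hc : ∀ s, 0 < s → 0 ≤ ∑ k, c k * rpowIntegrand₀₁ p s (x k))
    (hle : ∑ k, c k * x k ^ p ≤ 0) {s : ℝ} (hs : 0 < s) :
    ∑ k, c k * rpowIntegrand₀₁ p s (x k) = 0 := by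
  have hint (k : κ) (_ : k ∈ Finset.univ) :
      IntegrableOn (fun s => c k * rpowIntegrand₀₁ p s (x k)) (Set.Ioi 0) :=
    (integrableOn_rpowIntegrand₀₁_Ioi hp (hx k).le).const_mul _
  have hcont : ContinuousOn (fun s => ∑ k, c k * rpowIntegrand₀₁ p s (x k)) (Set.Ioi 0) :=
    continuousOn_finsetSum _ fun k _ =>
      continuousOn_const.mul (continuousOn_rpowIntegrand₀₁ hp (hx k).le)
  refine eqOn_zero_of_setIntegral_Ioi_nonpos hcont (integrable_finsetSum _ hint) hc ?_ hs
  calc ∫ s in Set.Ioi 0, ∑ k, c k * rpowIntegrand₀₁ p s (x k)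
      = ∑ k, c k * (x k ^ p * ∫ s in Set.Ioi 0, rpowIntegrand₀₁ p s 1) := by
        simp only [integral_finsetSum _ hint, integral_const_mul,
          integral_rpowIntegrand₀₁_eq_rpow_mul_const hp (hx _).le]
    _ = (∑ k, c k * x k ^ p) * ∫ s in Set.Ioi 0, rpowIntegrand₀₁ p s 1 := by
        simp only [Finset.sum_mul, mul_assoc]
    _ ≤ 0 := mul_nonpos_of_nonpos_of_nonneg hle (integral_rpowIntegrand₀₁_one_pos hp).le

theorem sum_resolvent_eq_zero_of_rpow_nonneg (hp : p ∈ Set.Ioo 0 1) (hx : ∀ k, 0 < x k)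
    (hc0 : ∑ k, c k = 0) (hc : ∀ s, 0 < s → 0 ≤ ∑ k, c k * (x k + s)⁻¹)
    (hle : 0 ≤ ∑ k, c k * x k ^ p) {s : ℝ} (hs : 0 < s) : ∑ k, c k * (x k + s)⁻¹ = 0 := by
  have key (s : ℝ) :
      ∑ k, -c k * rpowIntegrand₀₁ p s (x k) = s ^ p * ∑ k, c k * (x k + s)⁻¹ := by
    have (k : κ) : -c k * rpowIntegrand₀₁ p s (x k) =
        s ^ p * (c k * (x k + s)⁻¹) - s ^ p * s⁻¹ * c k := by
      rw [rpowIntegrand₀₁, add_comm s]; ring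
    simp only [this, Finset.sum_sub_distrib, ← Finset.mul_sum, hc0, mul_zero, sub_zero]
  have h := sum_mul_rpowIntegrand₀₁_eq_zero (c := fun k => -c k) hp hx
    (fun s hs => key s ▸ mul_nonneg (rpow_nonneg hs.le p) (hc s hs))
    (by simpa only [neg_mul, Finset.sum_neg_distrib, neg_nonpos] using hle) hs
  exact (mul_eq_zero.mp ((key s).symm.trans h)).resolve_left (rpow_pos_of_pos hs p).ne'

theorem sum_resolvent_eq_zero_of_rpow_nonpos (hp : p ∈ Set.Ioo (-1) 0) (hx : ∀ k, 0 < x k)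
    (hc : ∀ s, 0 < s → 0 ≤ ∑ k, c k * (x k + s)⁻¹)
    (hle : ∑ k, c k * x k ^ p ≤ 0) {s : ℝ} (hs : 0 < s) : ∑ k, c k * (x k + s)⁻¹ = 0 := by
  have hp' : p + 1 ∈ Set.Ioo (0 : ℝ) 1 := ⟨by linarith [hp.1], by linarith [hp.2]⟩
  have key (s : ℝ) (hs : 0 < s) :
      ∑ k, c k / x k * rpowIntegrand₀₁ (p + 1) s (x k) = s ^ p * ∑ k, c k * (x k + s)⁻¹ := by
    rw [Finset.mul_sum]
    refine Finset.sum_congr rfl fun k _ => ?_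
    have hk := (hx k).ne'
    rw [rpowIntegrand₀₁_eq_pow_div hp' hs.le (hx k).le, add_sub_cancel_right, add_comm s]
    field_simp
  have hpow (k : κ) : c k / x k * x k ^ (p + 1) = c k * x k ^ p := by
    have hk := (hx k).ne'
    rw [rpow_add_one hk]
    field_simp
  have h := sum_mul_rpowIntegrand₀₁_eq_zero (c := fun k => c k / x k) hp' hx
    (fun s hs => key s hs ▸ mul_nonneg (rpow_nonneg hs.le p) (hc s hs))
    (by simpa only [hpow] using hle) hs
  exact (mul_eq_zero.mp ((key s hs).symm.trans h)).resolve_left (rpow_pos_of_pos hs p).ne'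

end StieltjesRigidity

section ResolventSpan

open Polynomial

-- Partial fractions: `Q = ∏ s ∈ S, (X + s)` has `#S` distinct roots, so `P / Q` with `P`
-- interpolating `f * Q` on `S` is a combination of the functions `x ↦ (x + s)⁻¹`.
theorem exists_eqOn_sum_resolvent (S : Finset ℝ) (hS : ∀ x ∈ S, 0 < x) (f : ℝ → ℝ) :
    ∃ c : ℝ → ℝ, ∀ x ∈ S, f x = ∑ s ∈ S, c s * (x + s)⁻¹ := by
  let Q : ℝ[X] := Lagrange.nodal S (fun s => -s)
  let P : ℝ[X] := Lagrange.interpolate S id (fun x => f x * Q.eval x)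
  have hinj : Set.InjOn (fun s : ℝ => -s) S := neg_injective.injOn
  have hP : P = Lagrange.interpolate S (fun s => -s) (fun s => P.eval (-s)) :=
    Lagrange.eq_interpolate hinj (Lagrange.degree_interpolate_lt _ (Set.injOn_id _))
  refine ⟨fun s => Lagrange.nodalWeight S (fun s => -s) s * P.eval (-s), fun x hx => ?_⟩
  have hxS (s : ℝ) (hs : s ∈ S) : x ≠ -s := by linarith [hS x hx, hS s hs]
  have hQ : Q.eval x ≠ 0 := Lagrange.eval_nodal_not_at_node hxS
  have hfx : P.eval x = f x * Q.eval x := Lagrange.eval_interpolate_at_node _ (Set.injOn_id _) hx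
  rw [hP, Lagrange.eval_interpolate_not_at_node _ hxS, mul_comm] at hfx
  rw [← mul_right_cancel₀ hQ hfx]
  refine Finset.sum_congr rfl fun s _ => ?_
  rw [sub_neg_eq_add]
  ring

end ResolventSpan

section SpectralForm

open scoped MatrixOrder

variable {ι κ : Type*} [Fintype ι] [DecidableEq ι] [Fintype κ] [DecidableEq κ]

/-- The spectral quadratic form `⟨η, f(A) η⟩`, real for Hermitian `A`. -/
noncomputable def spectralForm (A : Matrix κ κ ℂ) (f : ℝ → ℝ) (η : κ → ℂ) : ℝ :=
  (star η ⬝ᵥ cfc f A *ᵥ η).re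

theorem spectralForm_eq_sum {A : Matrix κ κ ℂ} (hA : A.IsHermitian) (f : ℝ → ℝ) (η : κ → ℂ) :
    spectralForm A f η =
      ∑ k, Complex.normSq (((hA.eigenvectorUnitary : Matrix κ κ ℂ)ᴴ *ᵥ η) k) *
        f (hA.eigenvalues k) := by
  let U : Matrix κ κ ℂ := hA.eigenvectorUnitary
  have h : star η ⬝ᵥ cfc f A *ᵥ η =
      star (Uᴴ *ᵥ η) ⬝ᵥ (Matrix.diagonal fun k => (f (hA.eigenvalues k) : ℂ)) *ᵥ (Uᴴ *ᵥ η) := by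
    rw [cfc_eq_eigenvectorUnitary_conj hA, Matrix.star_mulVec, Matrix.conjTranspose_conjTranspose,
      ← Matrix.dotProduct_mulVec, Matrix.mulVec_mulVec, Matrix.mulVec_mulVec]
  rw [spectralForm, h, dotProduct, Complex.re_sum]
  refine Finset.sum_congr rfl fun k _ => ?_
  rw [Matrix.mulVec_diagonal, Pi.star_apply, mul_left_comm, Complex.star_def,
    ← Complex.normSq_eq_conj_mul_self, ← Complex.ofReal_mul, Complex.ofReal_re, mul_comm]

theorem exists_spectralForm_sub_eq_sum {D : Matrix κ κ ℂ} {D₀ : Matrix ι ι ℂ} (hD : D.PosDef)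
    (hD₀ : D₀.PosDef) (η : κ → ℂ) (ξ : ι → ℂ) :
    ∃ c x : κ ⊕ ι → ℝ, (∀ k, 0 < x k) ∧
      ∀ f : ℝ → ℝ, spectralForm D f η - spectralForm D₀ f ξ = ∑ k, c k * f (x k) := by
  refine ⟨Sum.elim (fun k => Complex.normSq (((hD.1.eigenvectorUnitary : Matrix κ κ ℂ)ᴴ *ᵥ η) k))
    (fun k => -Complex.normSq (((hD₀.1.eigenvectorUnitary : Matrix ι ι ℂ)ᴴ *ᵥ ξ) k)),
    Sum.elim hD.1.eigenvalues hD₀.1.eigenvalues, ?_, fun f => ?_⟩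
  · rintro (k | k)
    · exact hD.eigenvalues_pos k
    · exact hD₀.eigenvalues_pos k
  · simp only [spectralForm_eq_sum hD.1, spectralForm_eq_sum hD₀.1, Fintype.sum_sum_type,
      Sum.elim_inl, Sum.elim_inr, neg_mul, Finset.sum_neg_distrib, sub_eq_add_neg]

theorem spectralForm_one {A : Matrix κ κ ℂ} (hA : A.IsHermitian) (η : κ → ℂ) :
    spectralForm A (fun _ => 1) η = (star η ⬝ᵥ η).re := by
  rw [spectralForm, cfc_const_one ℝ A hA.isSelfAdjoint, Matrix.one_mulVec]

theorem spectralForm_rpow {A : Matrix κ κ ℂ} (hA : A.PosDef) (p : ℝ) (η : κ → ℂ) :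
    spectralForm A (fun x => x ^ p) η = (star η ⬝ᵥ mpow A p *ᵥ η).re := by
  rw [spectralForm, mpow_eq_cfc hA]

theorem spectrum_pos {A : Matrix κ κ ℂ} (hA : A.PosDef) {x : ℝ} (hx : x ∈ spectrum ℝ A) :
    0 < x := by
  rw [hA.1.spectrum_real_eq_range_eigenvalues] at hx
  obtain ⟨k, rfl⟩ := hx
  exact hA.eigenvalues_pos k

theorem cfc_mul_cfc_inv {A : Matrix κ κ ℂ} (hA : A.PosDef) {f : ℝ → ℝ}
    (hf : ∀ x, 0 < x → 0 < f x) : cfc f A * cfc (fun x => (f x)⁻¹) A = 1 := by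
  rw [← cfc_mul _ _ A (continuousOn_spectrum_matrix _ A) (continuousOn_spectrum_matrix _ A),
    ← cfc_const_one ℝ A hA.1.isSelfAdjoint]
  exact cfc_congr fun x hx => mul_inv_cancel₀ (hf x (spectrum_pos hA hx)).ne'

end SpectralForm

section CompressedResolvent

open scoped MatrixOrder

variable {ι κ : Type*} [Fintype ι] [DecidableEq ι] [Fintype κ] [DecidableEq κ]
  {D : Matrix κ κ ℂ} {D₀ : Matrix ι ι ℂ} {V J : Matrix κ ι ℂ} {ξ : ι → ℂ} {f : ℝ → ℝ}

/-- The failure `f(D)⁻¹ V - V f(D₀)⁻¹` of `V` to intertwine `f(D₀)⁻¹` and `f(D)⁻¹`; it measures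
the gap in Jensen's inequality for the inverse. -/
noncomputable def inverseDefect (D : Matrix κ κ ℂ) (D₀ : Matrix ι ι ℂ) (V : Matrix κ ι ℂ)
    (f : ℝ → ℝ) : Matrix κ ι ℂ :=
  cfc (fun x => (f x)⁻¹) D * V - V * cfc (fun x => (f x)⁻¹) D₀

theorem inverseDefect_conj (hD : D.PosDef) (hD₀ : D₀.PosDef) (hV : Vᴴ * V = 1)
    (hf : ∀ x, 0 < x → 0 < f x) (hVD : Vᴴ * cfc f D * V = cfc f D₀) :
    (inverseDefect D D₀ V f)ᴴ * cfc f D * inverseDefect D D₀ V f =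
      Vᴴ * cfc (fun x => (f x)⁻¹) D * V - cfc (fun x => (f x)⁻¹) D₀ := by
  rw [inverseDefect]
  set G := cfc f D
  set H := cfc (fun x => (f x)⁻¹) D
  set N := cfc f D₀
  set M := cfc (fun x => (f x)⁻¹) D₀
  have hGH : G * H = 1 := cfc_mul_cfc_inv hD hf
  have hHG : H * G = 1 := mul_eq_one_comm.mp hGH
  have hNM : N * M = 1 := cfc_mul_cfc_inv hD₀ hf
  have hH : Hᴴ = H := IsSelfAdjoint.cfc
  have hM : Mᴴ = M := IsSelfAdjoint.cfc
  calc (H * V - V * M)ᴴ * G * (H * V - V * M)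
      = Vᴴ * H * (G * H) * V - Vᴴ * (H * G) * V * M - M * Vᴴ * (G * H) * V
          + M * (Vᴴ * G * V * M) := by
        rw [Matrix.conjTranspose_sub, Matrix.conjTranspose_mul, Matrix.conjTranspose_mul, hH, hM]
        simp only [Matrix.mul_sub, Matrix.sub_mul, Matrix.mul_assoc]
        abel
    _ = Vᴴ * H * V - M := by
        rw [hGH, hHG, hVD, hNM]
        simp only [Matrix.mul_one, Matrix.mul_assoc, hV, Matrix.one_mul]
        abel

theorem spectralForm_inv_sub (hD : D.PosDef) (hD₀ : D₀.PosDef) (hV : Vᴴ * V = 1)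
    (hf : ∀ x, 0 < x → 0 < f x) (hVD : Vᴴ * cfc f D * V = cfc f D₀) :
    spectralForm D (fun x => (f x)⁻¹) (V *ᵥ ξ) - spectralForm D₀ (fun x => (f x)⁻¹) ξ =
      spectralForm D f (inverseDefect D D₀ V f *ᵥ ξ) := by
  simp only [spectralForm, ← Complex.sub_re, Matrix.star_mulVec, ← Matrix.dotProduct_mulVec,
    Matrix.mulVec_mulVec, ← dotProduct_sub, ← Matrix.sub_mulVec]
  rw [← Matrix.mul_assoc, ← Matrix.mul_assoc, inverseDefect_conj hD hD₀ hV hf hVD]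

theorem posSemidef_cfc (hD : D.PosDef) (hf : ∀ x, 0 < x → 0 < f x) : (cfc f D).PosSemidef :=
  Matrix.nonneg_iff_posSemidef.mp (cfc_nonneg fun x hx => (hf x (spectrum_pos hD hx)).le)

theorem spectralForm_inv_le (hD : D.PosDef) (hD₀ : D₀.PosDef) (hV : Vᴴ * V = 1)
    (hf : ∀ x, 0 < x → 0 < f x) (hVD : Vᴴ * cfc f D * V = cfc f D₀) (ξ : ι → ℂ) :
    spectralForm D₀ (fun x => (f x)⁻¹) ξ ≤ spectralForm D (fun x => (f x)⁻¹) (V *ᵥ ξ) := by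
  rw [← sub_nonneg, spectralForm_inv_sub hD hD₀ hV hf hVD]
  exact (posSemidef_cfc hD hf).re_dotProduct_nonneg _

theorem cfc_inv_mulVec_of_spectralForm_eq (hD : D.PosDef) (hD₀ : D₀.PosDef) (hV : Vᴴ * V = 1)
    (hf : ∀ x, 0 < x → 0 < f x) (hVD : Vᴴ * cfc f D * V = cfc f D₀)
    (heq : spectralForm D (fun x => (f x)⁻¹) (V *ᵥ ξ) = spectralForm D₀ (fun x => (f x)⁻¹) ξ) :
    cfc (fun x => (f x)⁻¹) D *ᵥ (V *ᵥ ξ) = V *ᵥ (cfc (fun x => (f x)⁻¹) D₀ *ᵥ ξ) := by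
  have hpsd := posSemidef_cfc hD hf
  have hform : star (inverseDefect D D₀ V f *ᵥ ξ) ⬝ᵥ
      cfc f D *ᵥ (inverseDefect D D₀ V f *ᵥ ξ) = 0 := by
    refine Complex.ext ?_ (Complex.nonneg_iff.mp (hpsd.dotProduct_mulVec_nonneg _)).2.symm
    exact (spectralForm_inv_sub hD hD₀ hV hf hVD).symm.trans (sub_eq_zero.mpr heq)
  have hker := (hpsd.dotProduct_mulVec_zero_iff _).mp hform
  have hdef : inverseDefect D D₀ V f *ᵥ ξ = 0 := by
    rw [← Matrix.one_mulVec (_ *ᵥ ξ), ← mul_eq_one_comm.mp (cfc_mul_cfc_inv hD hf),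
      ← Matrix.mulVec_mulVec, hker, Matrix.mulVec_zero]
  rw [inverseDefect, Matrix.sub_mulVec, sub_eq_zero] at hdef
  simpa only [Matrix.mulVec_mulVec] using hdef

theorem conj_cfc_add_const (hD : D.IsHermitian) (hD₀ : D₀.IsHermitian) (hV : Vᴴ * V = 1)
    (hVD : Vᴴ * cfc f D * V = cfc f D₀) (r : ℝ) :
    Vᴴ * cfc (fun x => f x + r) D * V = cfc (fun x => f x + r) D₀ := by
  rw [cfc_add_const r f D (continuousOn_spectrum_matrix f D) hD.isSelfAdjoint,
    cfc_add_const r f D₀ (continuousOn_spectrum_matrix f D₀) hD₀.isSelfAdjoint, Matrix.mul_add,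
    Matrix.add_mul, hVD, Algebra.algebraMap_eq_smul_one, Algebra.algebraMap_eq_smul_one,
    Matrix.mul_smul, Matrix.smul_mul, Matrix.mul_one, hV]

theorem conj_cfc_add_const_id (hD : D.IsHermitian) (hD₀ : D₀.IsHermitian) (hV : Vᴴ * V = 1)
    (hVD : Vᴴ * D * V = D₀) (s : ℝ) :
    Vᴴ * cfc (fun x => x + s) D * V = cfc (fun x => x + s) D₀ :=
  conj_cfc_add_const (f := fun x => x) hD hD₀ hV
    (by rwa [cfc_id' ℝ D hD.isSelfAdjoint, cfc_id' ℝ D₀ hD₀.isSelfAdjoint]) s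

theorem spectralForm_resolvent_le (hD : D.PosDef) (hD₀ : D₀.PosDef) (hV : Vᴴ * V = 1)
    (hVD : Vᴴ * D * V = D₀) (ξ : ι → ℂ) {s : ℝ} (hs : 0 < s) :
    spectralForm D₀ (fun x => (x + s)⁻¹) ξ ≤ spectralForm D (fun x => (x + s)⁻¹) (V *ᵥ ξ) :=
  spectralForm_inv_le hD hD₀ hV (fun _ hx => add_pos hx hs)
    (conj_cfc_add_const_id hD.1 hD₀.1 hV hVD s) ξ

theorem spectralForm_one_isometry (hD : D.IsHermitian) (hD₀ : D₀.IsHermitian) (hV : Vᴴ * V = 1)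
    (ξ : ι → ℂ) :
    spectralForm D (fun _ => 1) (V *ᵥ ξ) = spectralForm D₀ (fun _ => 1) ξ := by
  rw [spectralForm_one hD, spectralForm_one hD₀, Matrix.star_mulVec,
    ← Matrix.dotProduct_mulVec, Matrix.mulVec_mulVec, hV, Matrix.one_mulVec]

theorem cfc_eq_sum_resolvent {S : Finset ℝ} {c : ℝ → ℝ} (hS : spectrum ℝ D ⊆ S)
    (hc : ∀ x ∈ S, f x = ∑ s ∈ S, c s * (x + s)⁻¹) :
    cfc f D = ∑ s ∈ S, c s • cfc (fun x => (x + s)⁻¹) D := by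
  have hf : (spectrum ℝ D).EqOn f (∑ s ∈ S, fun x => c s * (x + s)⁻¹) := fun x hx => by
    rw [hc x (hS hx), Finset.sum_apply]
  rw [cfc_congr hf, cfc_sum _ D _ fun _ _ => continuousOn_spectrum_matrix _ D]
  exact Finset.sum_congr rfl fun s _ => cfc_const_mul _ _ D (continuousOn_spectrum_matrix _ D)

theorem exists_cfc_eq_sum_resolvent (hD : D.PosDef) (hD₀ : D₀.PosDef) (f : ℝ → ℝ) :
    ∃ (S : Finset ℝ) (c : ℝ → ℝ), (∀ s ∈ S, 0 < s) ∧
      cfc f D = ∑ s ∈ S, c s • cfc (fun x => (x + s)⁻¹) D ∧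
      cfc f D₀ = ∑ s ∈ S, c s • cfc (fun x => (x + s)⁻¹) D₀ := by
  have hfin : (spectrum ℝ D ∪ spectrum ℝ D₀).Finite :=
    Matrix.finite_real_spectrum.union Matrix.finite_real_spectrum
  have hpos : ∀ x ∈ hfin.toFinset, 0 < x := fun x hx =>
    (hfin.mem_toFinset.mp hx).elim (spectrum_pos hD) (spectrum_pos hD₀)
  obtain ⟨c, hc⟩ := exists_eqOn_sum_resolvent hfin.toFinset hpos f
  exact ⟨hfin.toFinset, c, hpos,
    cfc_eq_sum_resolvent (Set.subset_union_left.trans hfin.coe_toFinset.ge) hc,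
    cfc_eq_sum_resolvent (Set.subset_union_right.trans hfin.coe_toFinset.ge) hc⟩

theorem cfc_mulVec_of_spectralForm_resolvent_eq (hD : D.PosDef) (hD₀ : D₀.PosDef)
    (hV : Vᴴ * V = 1) (hVD : Vᴴ * D * V = D₀)
    (heq : ∀ s, 0 < s → spectralForm D (fun x => (x + s)⁻¹) (V *ᵥ ξ) =
      spectralForm D₀ (fun x => (x + s)⁻¹) ξ) (f : ℝ → ℝ) :
    cfc f D *ᵥ (V *ᵥ ξ) = V *ᵥ (cfc f D₀ *ᵥ ξ) := by
  obtain ⟨S, c, hS, hD_sum, hD₀_sum⟩ := exists_cfc_eq_sum_resolvent hD hD₀ f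
  rw [hD_sum, hD₀_sum, Matrix.sum_mulVec, Matrix.sum_mulVec, Matrix.mulVec_sum]
  refine Finset.sum_congr rfl fun s hs => ?_
  rw [Matrix.smul_mulVec, Matrix.smul_mulVec, Matrix.mulVec_smul,
    cfc_inv_mulVec_of_spectralForm_eq hD hD₀ hV (fun _ hx => add_pos hx (hS s hs))
      (conj_cfc_add_const_id hD.1 hD₀.1 hV hVD s) (heq s (hS s hs))]

theorem mpow_mulVec_of_rpow_form_le (hD : D.PosDef) (hD₀ : D₀.PosDef)
    (hV : Vᴴ * V = 1) (hVD : Vᴴ * D * V = D₀) {p : ℝ} (hp : p ∈ Set.Ioo (-1) 1) (hp0 : p ≠ 0)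
    (hle : 0 ≤ p * ((star (V *ᵥ ξ) ⬝ᵥ mpow D p *ᵥ (V *ᵥ ξ)).re -
      (star ξ ⬝ᵥ mpow D₀ p *ᵥ ξ).re)) (w : ℝ) :
    mpow D w *ᵥ (V *ᵥ ξ) = V *ᵥ (mpow D₀ w *ᵥ ξ) := by
  obtain ⟨c, x, hx, hcx⟩ := exists_spectralForm_sub_eq_sum hD hD₀ (V *ᵥ ξ) ξ
  have hc0 : ∑ k, c k = 0 := by
    simpa only [spectralForm_one_isometry hD.1 hD₀.1 hV, sub_self, mul_one] using
      (hcx fun _ => 1).symm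
  have hc (s : ℝ) (hs : 0 < s) : 0 ≤ ∑ k, c k * (x k + s)⁻¹ := by
    rw [← hcx fun x => (x + s)⁻¹, sub_nonneg]
    exact spectralForm_resolvent_le hD hD₀ hV hVD ξ hs
  rw [← spectralForm_rpow hD, ← spectralForm_rpow hD₀, hcx] at hle
  rw [mpow_eq_cfc hD, mpow_eq_cfc hD₀]
  refine cfc_mulVec_of_spectralForm_resolvent_eq hD hD₀ hV hVD (fun s hs => ?_) _
  rw [← sub_eq_zero, hcx fun x => (x + s)⁻¹]
  rcases hp0.lt_or_gt with hneg | hpos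
  · exact sum_resolvent_eq_zero_of_rpow_nonpos ⟨hp.1, hneg⟩ hx hc
      (nonpos_of_mul_nonneg_right hle hneg) hs
  · exact sum_resolvent_eq_zero_of_rpow_nonneg ⟨hpos, hp.2⟩ hx hc0 hc
      (nonneg_of_mul_nonneg_right hle hpos) hs

-- `V` and `J` bound the resolvent form of `D` at `V ξ = J ξ` from opposite sides, because
-- `(x⁻¹ + s⁻¹)⁻¹ = s - s² (x + s)⁻¹`.
theorem mpow_mulVec_of_isometry_inv (hD : D.PosDef) (hD₀ : D₀.PosDef)
    (hV : Vᴴ * V = 1) (hVD : Vᴴ * D * V = D₀) (hJ : Jᴴ * J = 1)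
    (hJD : Jᴴ * mpow D (-1) * J = mpow D₀ (-1)) (hJV : J *ᵥ ξ = V *ᵥ ξ) (w : ℝ) :
    mpow D w *ᵥ (V *ᵥ ξ) = V *ᵥ (mpow D₀ w *ᵥ ξ) := by
  obtain ⟨c, x, hx, hcx⟩ := exists_spectralForm_sub_eq_sum hD hD₀ (V *ᵥ ξ) ξ
  have hc0 : ∑ k, c k = 0 := by
    simpa only [spectralForm_one_isometry hD.1 hD₀.1 hV, sub_self, mul_one] using
      (hcx fun _ => 1).symm
  rw [mpow_eq_cfc hD, mpow_eq_cfc hD₀] at hJD ⊢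
  refine cfc_mulVec_of_spectralForm_resolvent_eq hD hD₀ hV hVD (fun s hs => ?_) _
  refine le_antisymm ?_ (spectralForm_resolvent_le hD hD₀ hV hVD ξ hs)
  have hJle := spectralForm_inv_le hD hD₀ hJ
    (fun x hx => add_pos (Real.rpow_pos_of_pos hx (-1)) (inv_pos.mpr hs))
    (conj_cfc_add_const hD.1 hD₀.1 hJ hJD s⁻¹) ξ
  have hresolvent (k) :
      c k * (x k ^ (-1 : ℝ) + s⁻¹)⁻¹ = s * c k - s ^ 2 * (c k * (x k + s)⁻¹) := by
    have hk := hx k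
    rw [Real.rpow_neg_one]
    field_simp
    ring
  rw [hJV, ← sub_nonneg, hcx fun x => (x ^ (-1 : ℝ) + s⁻¹)⁻¹] at hJle
  simp only [hresolvent, Finset.sum_sub_distrib, ← Finset.mul_sum, hc0, mul_zero, zero_sub,
    neg_nonneg] at hJle
  rw [← sub_nonpos, hcx fun x => (x + s)⁻¹]
  exact nonpos_of_mul_nonpos_right hJle (pow_pos hs 2)

end CompressedResolvent

section ModularOperator

open Matrix
open scoped Kronecker

variable {m n : Type*} [Fintype m] [DecidableEq m]

/-- The matrix, in the `Matrix.vec` coordinates, of a linear map between matrix algebras. -/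
def vecMatrix (T : Matrix m m ℂ →ₗ[ℂ] Matrix n n ℂ) : Matrix (n × n) (m × m) ℂ :=
  of fun k l => vec (T (single l.2 l.1 1)) k

theorem vecMatrix_mulVec_vec (T : Matrix m m ℂ →ₗ[ℂ] Matrix n n ℂ) (Z : Matrix m m ℂ) :
    vecMatrix T *ᵥ vec Z = vec (T Z) := by
  conv_rhs => rw [matrix_eq_sum_single Z]
  ext k
  simp only [map_sum, vec_sum, Finset.sum_apply, mulVec, dotProduct, Fintype.sum_prod_type]
  rw [Finset.sum_comm]
  refine Finset.sum_congr rfl fun i _ => Finset.sum_congr rfl fun j _ => ?_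
  rw [show single i j (Z i j) = Z i j • single i j (1 : ℂ) by
      rw [smul_single, smul_eq_mul, mul_one], map_smul, vec_smul, Pi.smul_apply, smul_eq_mul,
    mul_comm]
  rfl

variable [Fintype n]

theorem conj_vecMatrix_eq {T : Matrix m m ℂ →ₗ[ℂ] Matrix n n ℂ} {G : Matrix (n × n) (n × n) ℂ}
    {N : Matrix (m × m) (m × m) ℂ}
    (h : ∀ X Y, star (vec (T X)) ⬝ᵥ G *ᵥ vec (T Y) = star (vec X) ⬝ᵥ N *ᵥ vec Y) :
    (vecMatrix T)ᴴ * G * vecMatrix T = N := by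
  simp only [← vecMatrix_mulVec_vec, star_mulVec, ← dotProduct_mulVec, mulVec_mulVec,
    ← Matrix.mul_assoc] at h
  ext i j
  simpa only [vec_single, ← Pi.single_star, star_one, mulVec_single_one, single_one_dotProduct,
    col_apply]
    using h (single i.2 i.1 1) (single j.2 j.1 1)

theorem isometry_vecMatrix {T : Matrix m m ℂ →ₗ[ℂ] Matrix n n ℂ}
    (h : ∀ X Y, ((T X)ᴴ * T Y).trace = (Xᴴ * Y).trace) : (vecMatrix T)ᴴ * vecMatrix T = 1 := by
  classical
  simpa only [Matrix.mul_one] using conj_vecMatrix_eq (T := T) (G := 1) (N := 1) fun X Y => by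
    rw [one_mulVec, one_mulVec, star_vec_dotProduct_vec, star_vec_dotProduct_vec, h]

/-- The relative modular operator `Z ↦ L Z R⁻¹`, in the `Matrix.vec` coordinates. -/
noncomputable def modularOperator [DecidableEq n] (L R : Matrix n n ℂ) :
    Matrix (n × n) (n × n) ℂ :=
  (mpow R (-1))ᵀ ⊗ₖ L

variable [DecidableEq n] {L R : Matrix n n ℂ} {L₀ R₀ : Matrix m m ℂ}

theorem posDef_modularOperator (hL : L.PosDef) (hR : R.PosDef) : (modularOperator L R).PosDef :=
  (posDef_mpow hR (-1)).transpose.kronecker hL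

theorem mpow_modularOperator_mulVec_vec (hL : L.PosDef) (hR : R.PosDef) (w : ℝ)
    (Z : Matrix n n ℂ) :
    mpow (modularOperator L R) w *ᵥ vec Z = vec (mpow L w * Z * mpow R (-w)) := by
  rw [modularOperator, mpow_kronecker (posDef_mpow hR (-1)).transpose hL, kronecker_mulVec_vec,
    transpose_mpow (posDef_mpow hR (-1)).transpose, transpose_transpose, mpow_mpow hR,
    neg_one_mul]

theorem star_vec_dotProduct_mpow_modularOperator (hL : L.PosDef) (hR : R.PosDef) (w : ℝ)
    (X Y : Matrix n n ℂ) :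
    star (vec X) ⬝ᵥ mpow (modularOperator L R) w *ᵥ vec Y =
      (Xᴴ * (mpow L w * Y * mpow R (-w))).trace := by
  rw [mpow_modularOperator_mulVec_vec hL hR, star_vec_dotProduct_vec]

theorem conj_vecMatrix_mpow_modularOperator {T : Matrix m m ℂ →ₗ[ℂ] Matrix n n ℂ}
    (hL : L.PosDef) (hR : R.PosDef) (hL₀ : L₀.PosDef) (hR₀ : R₀.PosDef) (w : ℝ)
    (h : ∀ X Y, ((T X)ᴴ * (mpow L w * T Y * mpow R (-w))).trace =
      (Xᴴ * (mpow L₀ w * Y * mpow R₀ (-w))).trace) :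
    (vecMatrix T)ᴴ * mpow (modularOperator L R) w * vecMatrix T =
      mpow (modularOperator L₀ R₀) w :=
  conj_vecMatrix_eq fun X Y => by
    rw [star_vec_dotProduct_mpow_modularOperator hL hR,
      star_vec_dotProduct_mpow_modularOperator hL₀ hR₀, h]

end ModularOperator

section ChainPow

variable {n : Type*} [Fintype n] [DecidableEq n]

/-- The product `L^t M^{-t} N^t`; a positive definite `ρ` is a Markov chain exactly when its
powers `ρ^t` are of this form for the marginals of `ρ`. -/
noncomputable def chainPow (L M N : Matrix n n ℂ) (t : ℝ) : Matrix n n ℂ :=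
  mpow L t * mpow M (-t) * mpow N t

theorem conjTranspose_chainPow {L M N : Matrix n n ℂ} (hL : L.PosDef) (hM : M.PosDef)
    (hN : N.PosDef) (t : ℝ) : (chainPow L M N t)ᴴ = chainPow N M L t := by
  simp only [chainPow, Matrix.conjTranspose_mul, conjTranspose_mpow hL, conjTranspose_mpow hM,
    conjTranspose_mpow hN, Matrix.mul_assoc]

theorem mpow_mul_mpow_mul {A : Matrix n n ℂ} (hA : A.PosDef) (s t : ℝ) (X : Matrix n n ℂ) :
    mpow A s * (mpow A t * X) = mpow A (s + t) * X := by
  rw [← Matrix.mul_assoc, mpow_mul_mpow hA]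

theorem mpow_neg_mul_mpow_mul {A : Matrix n n ℂ} (hA : A.PosDef) (t : ℝ) (X : Matrix n n ℂ) :
    mpow A (-t) * (mpow A t * X) = X := by
  rw [← Matrix.mul_assoc, mpow_neg_mul_mpow hA, Matrix.one_mul]

theorem mpow_half_mul_mpow_half {A : Matrix n n ℂ} (hA : A.PosDef) :
    mpow A (1 / 2) * mpow A (1 / 2) = A := by
  rw [mpow_mul_mpow hA, add_halves, mpow_one hA]

theorem mpow_neg_half_mul_mul_mpow_neg_half {A : Matrix n n ℂ} (hA : A.PosDef) :
    mpow A (-(1 / 2)) * A * mpow A (-(1 / 2)) = 1 := by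
  nth_rw 2 [← mpow_half_mul_mpow_half hA]
  rw [mpow_neg_mul_mpow_mul hA, mpow_mul_mpow_neg hA]

theorem mul_mpow_cancel {A X Y : Matrix n n ℂ} (hA : A.PosDef) {t : ℝ}
    (h : X * mpow A t = Y * mpow A t) : X = Y :=
  (posDef_mpow hA t).isUnit.mul_right_cancel h

theorem mpow_eq_chainPow_of_intertwining {L M N R : Matrix n n ℂ} (hL : L.PosDef)
    (hM : M.PosDef) (hN : N.PosDef) (hR : R.PosDef) {t : ℝ}
    (h : ∀ w, mpow L w * (mpow M (-t) * mpow N t * mpow R (1 / 2)) * mpow R (-w) =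
      mpow M (w - t) * mpow N (t - w) * mpow R (1 / 2)) (u : ℝ) :
    mpow R u = chainPow L M N u := by
  have hshift (w : ℝ) : mpow L w * (mpow M (-t) * mpow N t) =
      mpow M (w - t) * mpow N (t - w) * mpow R w := by
    refine mul_mpow_cancel hR (t := 1 / 2 - w) ?_
    simpa only [Matrix.mul_assoc, mpow_mul_mpow hR, add_sub_cancel, ← sub_eq_add_neg] using h w
  have hbase : mpow L t * (mpow M (-t) * mpow N t) = mpow R t := by
    rw [hshift, sub_self, mpow_zero hM, mpow_zero hN, Matrix.one_mul, Matrix.one_mul]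
  have hratio : mpow M (-t) * mpow N t = mpow L (-t) * mpow R t := by
    rw [← hbase, mpow_neg_mul_mpow_mul hL]
  refine mul_mpow_cancel hR (t := t - u) ?_
  rw [mpow_mul_mpow hR, add_sub_cancel, chainPow, Matrix.mul_assoc, Matrix.mul_assoc]
  have hu := hshift (t - u)
  rw [hratio, mpow_mul_mpow_mul hL, sub_sub_cancel_left, sub_sub_cancel,
    Matrix.mul_assoc] at hu
  rw [← hu, mpow_mul_mpow_mul hL, show u + (t - u + -t) = 0 by ring, mpow_zero hL,
    Matrix.one_mul]

end ChainPow

section Restriction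

open Matrix

variable {m n : Type*} [Fintype m] [DecidableEq m] [Fintype n] [DecidableEq n]
  {φ : Matrix m m ℂ →⋆ₐ[ℂ] Matrix n n ℂ} {L R U : Matrix n n ℂ} {L₀ R₀ : Matrix m m ℂ}

/-- `R₀` is the density of the functional `Z ↦ tr (R φ(Z))`: the marginal of `R` on the
subalgebra embedded by `φ`. -/
def IsRestriction (φ : Matrix m m ℂ →⋆ₐ[ℂ] Matrix n n ℂ) (R : Matrix n n ℂ)
    (R₀ : Matrix m m ℂ) : Prop :=
  ∀ Z, (R * φ Z).trace = (R₀ * Z).trace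

/-- The map `Z ↦ φ(Z R₀^{-1/2}) R^{1/2}`; it is isometric when `R₀` is the restriction of `R`. -/
noncomputable def restrictionMap (φ : Matrix m m ℂ →⋆ₐ[ℂ] Matrix n n ℂ) (R : Matrix n n ℂ)
    (R₀ : Matrix m m ℂ) : Matrix m m ℂ →ₗ[ℂ] Matrix n n ℂ :=
  LinearMap.mulRight ℂ (mpow R (1 / 2)) ∘ₗ φ.toAlgHom.toLinearMap ∘ₗ
    LinearMap.mulRight ℂ (mpow R₀ (-(1 / 2)))

theorem restrictionMap_apply (φ : Matrix m m ℂ →⋆ₐ[ℂ] Matrix n n ℂ) (R : Matrix n n ℂ)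
    (R₀ Z : Matrix m m ℂ) :
    restrictionMap φ R R₀ Z = φ (Z * mpow R₀ (-(1 / 2))) * mpow R (1 / 2) :=
  rfl

theorem map_conjTranspose (φ : Matrix m m ℂ →⋆ₐ[ℂ] Matrix n n ℂ) (Z : Matrix m m ℂ) :
    φ Zᴴ = (φ Z)ᴴ :=
  map_star φ Z

theorem conjTranspose_restrictionMap (hR : R.PosDef) (hR₀ : R₀.PosDef) (Z : Matrix m m ℂ) :
    (restrictionMap φ R R₀ Z)ᴴ = mpow R (1 / 2) * φ (mpow R₀ (-(1 / 2)) * Zᴴ) := by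
  rw [restrictionMap_apply, conjTranspose_mul, conjTranspose_mpow hR, ← map_conjTranspose,
    conjTranspose_mul, conjTranspose_mpow hR₀]

theorem isometry_restrictionMap (hR : R.PosDef) (hR₀ : R₀.PosDef)
    (hres : IsRestriction φ R R₀) :
    (vecMatrix (restrictionMap φ R R₀))ᴴ * vecMatrix (restrictionMap φ R R₀) = 1 := by
  refine isometry_vecMatrix fun X Y => ?_
  set S := mpow R₀ (-(1 / 2))
  calc ((restrictionMap φ R R₀ X)ᴴ * restrictionMap φ R R₀ Y).trace
      = (mpow R (1 / 2) * (φ (S * Xᴴ) * φ (Y * S) * mpow R (1 / 2))).trace := by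
        rw [conjTranspose_restrictionMap hR hR₀, restrictionMap_apply]
        simp only [Matrix.mul_assoc, S]
    _ = (R * φ (S * Xᴴ * (Y * S))).trace := by
        rw [trace_mul_comm, Matrix.mul_assoc, mpow_half_mul_mpow_half hR,
          trace_mul_comm, map_mul φ (S * Xᴴ)]
    _ = (R₀ * (S * Xᴴ * Y * S)).trace := by rw [hres, Matrix.mul_assoc _ Y]
    _ = (S * R₀ * S * (Xᴴ * Y)).trace := by
        rw [← Matrix.mul_assoc, trace_mul_comm]
        simp only [Matrix.mul_assoc]
    _ = (Xᴴ * Y).trace := by rw [mpow_neg_half_mul_mul_mpow_neg_half hR₀, Matrix.one_mul]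

theorem conj_restrictionMap_modularOperator (hL : L.PosDef) (hR : R.PosDef) (hL₀ : L₀.PosDef)
    (hR₀ : R₀.PosDef) (hres : IsRestriction φ L L₀) :
    (vecMatrix (restrictionMap φ R R₀))ᴴ * modularOperator L R *
      vecMatrix (restrictionMap φ R R₀) = modularOperator L₀ R₀ := by
  rw [← mpow_one (posDef_modularOperator hL hR), ← mpow_one (posDef_modularOperator hL₀ hR₀)]
  refine conj_vecMatrix_mpow_modularOperator hL hR hL₀ hR₀ 1 fun X Y => ?_
  set S := mpow R₀ (-(1 / 2))
  have hSS : S * S = mpow R₀ (-1) := by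
    rw [mpow_mul_mpow hR₀]
    norm_num
  have hcancel : mpow R (1 / 2) * (mpow R (-1) * mpow R (1 / 2)) = 1 := by
    rw [mpow_mul_mpow hR, mpow_mul_mpow hR]
    norm_num [mpow_zero hR]
  calc ((restrictionMap φ R R₀ X)ᴴ * (mpow L 1 * restrictionMap φ R R₀ Y * mpow R (-1))).trace
      = (mpow R (1 / 2) * (φ (S * Xᴴ) * L * φ (Y * S) * (mpow R (1 / 2) * mpow R (-1)))).trace := by
        rw [conjTranspose_restrictionMap hR hR₀, restrictionMap_apply, mpow_one hL]
        simp only [Matrix.mul_assoc, S]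
    _ = (φ (S * Xᴴ) * (L * φ (Y * S))).trace := by
        rw [trace_mul_comm]
        simp only [Matrix.mul_assoc, hcancel, Matrix.mul_one]
    _ = (L * φ (Y * S * (S * Xᴴ))).trace := by
        rw [trace_mul_comm, Matrix.mul_assoc, map_mul φ (Y * S)]
    _ = (L₀ * (Y * (S * S) * Xᴴ)).trace := by
        rw [hres]
        simp only [Matrix.mul_assoc]
    _ = (Xᴴ * (mpow L₀ 1 * Y * mpow R₀ (-1))).trace := by
        rw [hSS, trace_mul_comm, mpow_one hL₀, trace_mul_comm, ← Matrix.mul_assoc, trace_mul_comm]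
        simp only [Matrix.mul_assoc]

/-- The vector `L₀^{-t} R₀^{t+1/2}` whose image under `restrictionMap φ R R₀` is
`φ(L₀)^{-t} φ(R₀)^t R^{1/2}`. -/
noncomputable def chainVector (L₀ R₀ : Matrix m m ℂ) (t : ℝ) : Matrix m m ℂ :=
  mpow L₀ (-t) * mpow R₀ (t + 1 / 2)

theorem restrictionMap_chainVector (hL₀ : L₀.PosDef) (hR₀ : R₀.PosDef) (t : ℝ) :
    restrictionMap φ R R₀ (chainVector L₀ R₀ t) =
      mpow (φ L₀) (-t) * mpow (φ R₀) t * mpow R (1 / 2) := by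
  rw [restrictionMap_apply, chainVector, Matrix.mul_assoc, mpow_mul_mpow hR₀,
    add_neg_cancel_right, map_mul, map_mpow φ hL₀, map_mpow φ hR₀]

theorem mpow_mul_chainVector_mul (hL₀ : L₀.PosDef) (hR₀ : R₀.PosDef) (t w : ℝ) :
    mpow L₀ w * chainVector L₀ R₀ t * mpow R₀ (-w) = chainVector L₀ R₀ (t - w) := by
  rw [chainVector, chainVector, mpow_mul_mpow_mul hL₀, Matrix.mul_assoc, mpow_mul_mpow hR₀,
    neg_sub, sub_eq_add_neg w, sub_add_eq_add_sub, sub_eq_add_neg]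

theorem mpow_eq_chainPow_of_mulVec (hL : L.PosDef) (hR : R.PosDef) (hL₀ : L₀.PosDef)
    (hR₀ : R₀.PosDef) {t : ℝ}
    (h : ∀ w, mpow (modularOperator L R) w *ᵥ
        (vecMatrix (restrictionMap φ R R₀) *ᵥ vec (chainVector L₀ R₀ t)) =
      vecMatrix (restrictionMap φ R R₀) *ᵥ
        (mpow (modularOperator L₀ R₀) w *ᵥ vec (chainVector L₀ R₀ t))) (u : ℝ) :
    mpow R u = chainPow L (φ L₀) (φ R₀) u := by
  refine mpow_eq_chainPow_of_intertwining (t := t) hL (posDef_map φ hL₀) (posDef_map φ hR₀) hR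
    (fun w => ?_) u
  have hw := h w
  rwa [vecMatrix_mulVec_vec, mpow_modularOperator_mulVec_vec hL hR,
    mpow_modularOperator_mulVec_vec hL₀ hR₀, vecMatrix_mulVec_vec,
    mpow_mul_chainVector_mul hL₀ hR₀, restrictionMap_chainVector hL₀ hR₀,
    restrictionMap_chainVector hL₀ hR₀, vec_inj, neg_sub] at hw

theorem modularForm_restrictionMap_chainVector (hL : L.PosDef) (hR : R.PosDef) (hL₀ : L₀.PosDef)
    (hR₀ : R₀.PosDef) (t : ℝ) :
    star (vec (restrictionMap φ R R₀ (chainVector L₀ R₀ t))) ⬝ᵥ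
        mpow (modularOperator L R) (2 * t) *ᵥ vec (restrictionMap φ R R₀ (chainVector L₀ R₀ t)) =
      (mpow R (1 - 2 * t) * (chainPow L (φ L₀) (φ R₀) t)ᴴ *
        chainPow L (φ L₀) (φ R₀) t).trace := by
  set W := mpow (φ L₀) (-t) * mpow (φ R₀) t with hW
  have hK : chainPow L (φ L₀) (φ R₀) t = mpow L t * W := Matrix.mul_assoc _ _ _
  have hpow : mpow R (1 / 2) * (mpow R (-(2 * t)) * mpow R (1 / 2)) = mpow R (1 - 2 * t) := by
    rw [mpow_mul_mpow hR, mpow_mul_mpow hR]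
    ring_nf
  rw [star_vec_dotProduct_mpow_modularOperator hL hR, restrictionMap_chainVector hL₀ hR₀, ← hW]
  calc ((W * mpow R (1 / 2))ᴴ * (mpow L (2 * t) * (W * mpow R (1 / 2)) * mpow R (-(2 * t)))).trace
      = (mpow R (1 / 2) * (Wᴴ * mpow L (2 * t) * W *
          (mpow R (1 / 2) * mpow R (-(2 * t))))).trace := by
        rw [conjTranspose_mul, conjTranspose_mpow hR]
        simp only [Matrix.mul_assoc]
    _ = (Wᴴ * (mpow L t * mpow L t) * W * mpow R (1 - 2 * t)).trace := by
        rw [trace_mul_comm, mpow_mul_mpow hL, ← two_mul]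
        simp only [Matrix.mul_assoc, hpow]
    _ = (mpow R (1 - 2 * t) * (mpow L t * W)ᴴ * (mpow L t * W)).trace := by
        rw [trace_mul_comm, conjTranspose_mul (mpow L t), conjTranspose_mpow hL]
        simp only [Matrix.mul_assoc]
    _ = _ := by rw [hK]

theorem modularForm_chainVector (hL₀ : L₀.PosDef) (hR₀ : R₀.PosDef) (t : ℝ) :
    star (vec (chainVector L₀ R₀ t)) ⬝ᵥ
        mpow (modularOperator L₀ R₀) (2 * t) *ᵥ vec (chainVector L₀ R₀ t) = R₀.trace := by
  rw [star_vec_dotProduct_mpow_modularOperator hL₀ hR₀, mpow_mul_chainVector_mul hL₀ hR₀,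
    chainVector, chainVector, conjTranspose_mul, conjTranspose_mpow hL₀, conjTranspose_mpow hR₀,
    Matrix.mul_assoc, mpow_mul_mpow_mul hL₀, trace_mul_comm, Matrix.mul_assoc, mpow_mul_mpow hR₀,
    show -t + -(t - 2 * t) = 0 by ring, show t - 2 * t + 1 / 2 + (t + 1 / 2) = 1 by ring,
    mpow_zero hL₀, mpow_one hR₀, Matrix.one_mul]

theorem mpow_eq_chainPow_of_trace_le (hL : L.PosDef) (hR : R.PosDef) (hL₀ : L₀.PosDef)
    (hR₀ : R₀.PosDef) (hresL : IsRestriction φ L L₀) (hresR : IsRestriction φ R R₀) {t : ℝ}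
    (ht : t ∈ Set.Ioo (-(1 / 2)) (1 / 2)) (ht0 : t ≠ 0)
    (hle : 0 ≤ t * ((mpow R (1 - 2 * t) * (chainPow L (φ L₀) (φ R₀) t)ᴴ *
      chainPow L (φ L₀) (φ R₀) t).trace.re - R.trace.re)) (u : ℝ) :
    mpow R u = chainPow L (φ L₀) (φ R₀) u := by
  have htrace : R.trace = R₀.trace := by
    simpa only [map_one, Matrix.mul_one] using hresR 1
  refine mpow_eq_chainPow_of_mulVec (t := t) hL hR hL₀ hR₀ (fun w => ?_) u
  refine mpow_mulVec_of_rpow_form_le (posDef_modularOperator hL hR)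
    (posDef_modularOperator hL₀ hR₀) (isometry_restrictionMap hR hR₀ hresR)
    (conj_restrictionMap_modularOperator hL hR hL₀ hR₀ hresL)
    (p := 2 * t) ⟨by linarith [ht.1], by linarith [ht.2]⟩ (mul_ne_zero two_ne_zero ht0) ?_ w
  rw [vecMatrix_mulVec_vec, modularForm_restrictionMap_chainVector hL hR hL₀ hR₀,
    modularForm_chainVector hL₀ hR₀, ← htrace, mul_assoc]
  exact mul_nonneg zero_le_two hle

/-- The isometry `Z ↦ M φ(Z) U` used to compare the inverses of the modular operators. -/
def sandwichMap (φ : Matrix m m ℂ →⋆ₐ[ℂ] Matrix n n ℂ) (M U : Matrix n n ℂ) :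
    Matrix m m ℂ →ₗ[ℂ] Matrix n n ℂ :=
  LinearMap.mulRight ℂ U ∘ₗ LinearMap.mulLeft ℂ M ∘ₗ φ.toAlgHom.toLinearMap

theorem sandwichMap_apply (φ : Matrix m m ℂ →⋆ₐ[ℂ] Matrix n n ℂ) (M U : Matrix n n ℂ)
    (Z : Matrix m m ℂ) : sandwichMap φ M U Z = M * φ Z * U :=
  rfl

/-- The square root `M = L^{1/2} φ(L₀)^{-1/2}` of the density of `L` relative to its marginal `L₀`:
`tr (Mᴴ M φ(Z)) = tr Z`. -/
noncomputable def restrictionRatio (φ : Matrix m m ℂ →⋆ₐ[ℂ] Matrix n n ℂ) (L : Matrix n n ℂ)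
    (L₀ : Matrix m m ℂ) : Matrix n n ℂ :=
  mpow L (1 / 2) * φ (mpow L₀ (-(1 / 2)))

theorem trace_restrictionRatio (hL : L.PosDef) (hL₀ : L₀.PosDef) (hres : IsRestriction φ L L₀)
    (Z : Matrix m m ℂ) :
    ((restrictionRatio φ L L₀)ᴴ * restrictionRatio φ L L₀ * φ Z).trace = Z.trace := by
  set S := mpow L₀ (-(1 / 2)) with hS
  have hφS : (φ S)ᴴ = φ S := by rw [← map_conjTranspose, conjTranspose_mpow hL₀]
  calc ((mpow L (1 / 2) * φ S)ᴴ * (mpow L (1 / 2) * φ S) * φ Z).trace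
      = (φ S * (mpow L (1 / 2) * mpow L (1 / 2) * (φ S * φ Z))).trace := by
        rw [conjTranspose_mul, conjTranspose_mpow hL, hφS]
        simp only [Matrix.mul_assoc]
    _ = (L * φ (S * Z * S)).trace := by
        rw [trace_mul_comm, mpow_half_mul_mpow_half hL, map_mul φ (S * Z),
          map_mul φ S, Matrix.mul_assoc]
    _ = (S * L₀ * S * Z).trace := by
        rw [hres, ← Matrix.mul_assoc, trace_mul_comm]
        simp only [Matrix.mul_assoc]
    _ = Z.trace := by rw [hS, mpow_neg_half_mul_mul_mpow_neg_half hL₀, Matrix.one_mul]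

theorem conj_inv_restrictionRatio (hL : L.PosDef) (hL₀ : L₀.PosDef) :
    (restrictionRatio φ L L₀)ᴴ * mpow L (-1) * restrictionRatio φ L L₀ = φ (mpow L₀ (-1)) := by
  rw [restrictionRatio, conjTranspose_mul, conjTranspose_mpow hL, ← map_conjTranspose,
    conjTranspose_mpow hL₀]
  simp only [Matrix.mul_assoc, mpow_mul_mpow_mul hL]
  rw [show (1 / 2 + (-1 + 1 / 2) : ℝ) = 0 by norm_num, mpow_zero hL, Matrix.one_mul, ← map_mul,
    mpow_mul_mpow hL₀]
  norm_num

theorem isometry_sandwichMap (hL : L.PosDef) (hL₀ : L₀.PosDef) (hres : IsRestriction φ L L₀)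
    (hU : U * Uᴴ = 1) :
    (vecMatrix (sandwichMap φ (restrictionRatio φ L L₀) U))ᴴ *
      vecMatrix (sandwichMap φ (restrictionRatio φ L L₀) U) = 1 := by
  refine isometry_vecMatrix fun X Y => ?_
  set M := restrictionRatio φ L L₀ with hM
  calc ((M * φ X * U)ᴴ * (M * φ Y * U)).trace
      = (Mᴴ * M * φ (Y * Xᴴ)).trace := by
        rw [conjTranspose_mul, conjTranspose_mul, trace_mul_comm, ← map_conjTranspose, map_mul]
        rw [show M * φ Y * U * (Uᴴ * (φ Xᴴ * Mᴴ)) = M * φ Y * (U * Uᴴ) * φ Xᴴ * Mᴴ by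
          simp only [Matrix.mul_assoc], hU, Matrix.mul_one, trace_mul_comm]
        simp only [Matrix.mul_assoc]
    _ = (Xᴴ * Y).trace := by rw [hM, trace_restrictionRatio hL hL₀ hres, trace_mul_comm]

theorem conj_sandwichMap_modularOperator (hL : L.PosDef) (hR : R.PosDef) (hL₀ : L₀.PosDef)
    (hR₀ : R₀.PosDef) (hres : IsRestriction φ L L₀)
    (hU : U * R * Uᴴ = φ (mpow R₀ (1 / 2)) * (restrictionRatio φ L L₀)ᴴ *
      restrictionRatio φ L L₀ * φ (mpow R₀ (1 / 2))) :
    (vecMatrix (sandwichMap φ (restrictionRatio φ L L₀) U))ᴴ *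
      mpow (modularOperator L R) (-1) * vecMatrix (sandwichMap φ (restrictionRatio φ L L₀) U) =
      mpow (modularOperator L₀ R₀) (-1) := by
  refine conj_vecMatrix_mpow_modularOperator hL hR hL₀ hR₀ (-1) fun X Y => ?_
  set M := restrictionRatio φ L L₀ with hM
  set Q := mpow R₀ (1 / 2)
  have hQ : Q * Q = R₀ := mpow_half_mul_mpow_half hR₀
  rw [neg_neg, mpow_one hR, mpow_one hR₀]
  calc ((M * φ X * U)ᴴ * (mpow L (-1) * (M * φ Y * U) * R)).trace
      = (φ Xᴴ * (Mᴴ * mpow L (-1) * M) * φ Y * (U * R * Uᴴ)).trace := by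
        rw [conjTranspose_mul, conjTranspose_mul, Matrix.mul_assoc, trace_mul_comm,
          ← map_conjTranspose]
        simp only [Matrix.mul_assoc]
    _ = (φ Xᴴ * φ (mpow L₀ (-1)) * φ Y * φ Q * (Mᴴ * M * φ Q)).trace := by
        rw [hM, conj_inv_restrictionRatio hL hL₀, ← hM, hU]
        simp only [Matrix.mul_assoc]
    _ = (Mᴴ * M * φ (Q * (Xᴴ * mpow L₀ (-1) * Y * Q))).trace := by
        rw [trace_mul_comm]
        simp only [map_mul, Matrix.mul_assoc]
    _ = (Xᴴ * (mpow L₀ (-1) * Y * R₀)).trace := by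
        rw [hM, trace_restrictionRatio hL hL₀ hres, trace_mul_comm, ← hQ]
        simp only [Matrix.mul_assoc]

theorem exists_polar_decomposition {K : Matrix n n ℂ} (hR : R.PosDef) (hK : Kᴴ * K = R) :
    ∃ U : Matrix n n ℂ, Uᴴ * U = 1 ∧ U * mpow R (1 / 2) = K := by
  refine ⟨K * mpow R (-(1 / 2)), ?_, ?_⟩
  · rw [conjTranspose_mul, conjTranspose_mpow hR, Matrix.mul_assoc, ← Matrix.mul_assoc Kᴴ, hK,
      ← Matrix.mul_assoc, mpow_neg_half_mul_mul_mpow_neg_half hR]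
  · rw [Matrix.mul_assoc, mpow_neg_mul_mpow hR, Matrix.mul_one]

theorem polar_conj {K : Matrix n n ℂ} (hR : R.PosDef) (hUK : U * mpow R (1 / 2) = K) :
    U * R * Uᴴ = K * Kᴴ := by
  rw [← hUK, conjTranspose_mul, conjTranspose_mpow hR, Matrix.mul_assoc U (mpow R _),
    ← Matrix.mul_assoc (mpow R _), mpow_half_mul_mpow_half hR, Matrix.mul_assoc]

theorem mpow_eq_chainPow_of_markov (hL : L.PosDef) (hR : R.PosDef) (hL₀ : L₀.PosDef)
    (hR₀ : R₀.PosDef) (hresL : IsRestriction φ L L₀) (hresR : IsRestriction φ R R₀)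
    (hmarkov : R = chainPow L (φ L₀) (φ R₀) (1 / 2) * chainPow (φ R₀) (φ L₀) L (1 / 2))
    (u : ℝ) : mpow R u = chainPow L (φ L₀) (φ R₀) u := by
  set M := restrictionRatio φ L L₀ with hM
  set Q := φ (mpow R₀ (1 / 2)) with hQ
  have hchain : chainPow L (φ L₀) (φ R₀) (1 / 2) = M * Q := by
    rw [chainPow, hM, restrictionRatio, hQ, map_mpow φ hL₀, map_mpow φ hR₀]
  have hQH : Qᴴ = Q := by rw [hQ, ← map_conjTranspose, conjTranspose_mpow hR₀]
  have hMQ : (Q * Mᴴ)ᴴ = M * Q := by rw [conjTranspose_mul, conjTranspose_conjTranspose, hQH]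
  rw [← conjTranspose_chainPow hL (posDef_map φ hL₀) (posDef_map φ hR₀), hchain,
    conjTranspose_mul, hQH, ← hMQ] at hmarkov
  obtain ⟨U, hUU, hUR⟩ := exists_polar_decomposition hR hmarkov.symm
  have hURU : U * R * Uᴴ = Q * Mᴴ * M * Q := by
    rw [polar_conj hR hUR, hMQ, Matrix.mul_assoc (Q * Mᴴ)]
  have hMQU : M * Q * U = mpow R (1 / 2) := by
    rw [← hMQ, ← hUR, conjTranspose_mul, conjTranspose_mpow hR, Matrix.mul_assoc, hUU,
      Matrix.mul_one]
  refine mpow_eq_chainPow_of_mulVec (t := 0) hL hR hL₀ hR₀ (fun w => ?_) u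
  refine mpow_mulVec_of_isometry_inv (posDef_modularOperator hL hR)
    (posDef_modularOperator hL₀ hR₀) (isometry_restrictionMap hR hR₀ hresR)
    (conj_restrictionMap_modularOperator hL hR hL₀ hR₀ hresL)
    (isometry_sandwichMap hL hL₀ hresL (mul_eq_one_comm.mp hUU))
    (conj_sandwichMap_modularOperator hL hR hL₀ hR₀ hresL hURU) ?_ w
  rw [vecMatrix_mulVec_vec, vecMatrix_mulVec_vec, restrictionMap_chainVector hL₀ hR₀,
    sandwichMap_apply, chainVector, neg_zero, zero_add, mpow_zero hL₀, Matrix.one_mul,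
    mpow_zero (posDef_map φ hL₀), mpow_zero (posDef_map φ hR₀), Matrix.one_mul, Matrix.one_mul,
    hMQU]

end Restriction

section PartialTrace

open Matrix
open scoped Kronecker

variable {k m n : Type*} [Fintype k]

/-- The partial trace over the factor `k` of a matrix indexed by `n ≃ k × m`. -/
def partialTrace (e : k × m ≃ n) (M : Matrix n n ℂ) : Matrix m m ℂ :=
  ∑ a, M.submatrix (fun i => e (a, i)) fun i => e (a, i)

theorem posDef_partialTrace [Nonempty k] (e : k × m ≃ n) {M : Matrix n n ℂ} (hM : M.PosDef) :
    (partialTrace e M).PosDef :=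
  posDef_sum Finset.univ_nonempty fun a _ =>
    hM.submatrix (e.injective.comp (Prod.mk_right_injective a))

variable [DecidableEq k] [Fintype m] [DecidableEq m] [Fintype n] [DecidableEq n]

/-- The embedding `Z ↦ I ⊗ Z` of the algebra of the factor `m` of `n ≃ k × m`. -/
def ampliation (e : k × m ≃ n) : Matrix m m ℂ →⋆ₐ[ℂ] Matrix n n ℂ where
  toFun Z := reindexAlgEquiv ℂ ℂ e (1 ⊗ₖ Z)
  map_one' := by rw [one_kronecker_one, map_one]
  map_mul' Y Z := by rw [← map_mul, ← mul_kronecker_mul, Matrix.one_mul]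
  map_zero' := by rw [kronecker_zero, map_zero]
  map_add' Y Z := by rw [kronecker_add, map_add]
  commutes' r := by
    rw [Algebra.algebraMap_eq_smul_one, kronecker_smul, one_kronecker_one, map_smul, map_one,
      Algebra.algebraMap_eq_smul_one]
  map_star' Z := by
    simp only [coe_reindexAlgEquiv, reindex_apply, star_eq_conjTranspose,
      conjTranspose_submatrix, conjTranspose_kronecker, conjTranspose_one]

theorem ampliation_apply (e : k × m ≃ n) (Z : Matrix m m ℂ) (x y : n) :
    ampliation e Z x y =
      (if (e.symm x).1 = (e.symm y).1 then 1 else 0) * Z (e.symm x).2 (e.symm y).2 := by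
  rw [← one_apply]
  rfl

theorem isRestriction_partialTrace (e : k × m ≃ n) (M : Matrix n n ℂ) :
    IsRestriction (ampliation e) M (partialTrace e M) := by
  intro Z
  simp only [trace, diag_apply, mul_apply, partialTrace, Matrix.sum_apply, submatrix_apply,
    ampliation_apply, ← e.sum_comp, Fintype.sum_prod_type, Equiv.symm_apply_apply, ite_mul,
    one_mul, zero_mul, mul_ite, mul_zero, Finset.sum_mul]
  rw [Finset.sum_comm]
  refine Finset.sum_congr rfl fun i _ => Finset.sum_congr rfl fun a _ => ?_
  rw [Finset.sum_comm]
  simp only [Finset.sum_ite_eq', Finset.mem_univ, if_true]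

end PartialTrace

section TripartiteMarginals

variable {dA dB dC : ℕ}

/-- The bipartition `B | AC` of the tripartite index set. -/
def splitB (dA dB dC : ℕ) : Fin dB × Fin dA × Fin dC ≃ Fin dA × Fin dB × Fin dC where
  toFun x := (x.2.1, x.1, x.2.2)
  invFun x := (x.2.1, x.1, x.2.2)
  left_inv _ := rfl
  right_inv _ := rfl

/-- The bipartition `A | BC` of the tripartite index set. -/
def splitA (dA dB dC : ℕ) : Fin dA × Fin dB × Fin dC ≃ Fin dA × Fin dB × Fin dC :=
  Equiv.refl _

variable (ρ : Matrix (Fin dA × Fin dB × Fin dC) (Fin dA × Fin dB × Fin dC) ℂ)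

theorem ampliation_partialTrace_splitB :
    ampliation (splitB dA dB dC) (partialTrace (splitB dA dB dC) ρ) = redAC ρ := by
  ext x y
  rw [ampliation_apply, partialTrace, Matrix.sum_apply]
  rfl

theorem ampliation_partialTrace_splitA :
    ampliation (splitA dA dB dC) (partialTrace (splitA dA dB dC) ρ) = redBC ρ := by
  ext x y
  rw [ampliation_apply, partialTrace, Matrix.sum_apply]
  rfl

theorem redAC_redBC : redAC (redBC ρ) = redC ρ := by
  ext x y
  simp only [redAC, redBC, redC, Finset.mul_sum]
  rw [Finset.sum_comm]
  refine Finset.sum_congr rfl fun i _ => Finset.sum_congr rfl fun j _ => ?_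
  ring

theorem redBC_redAC : redBC (redAC ρ) = redC ρ := by
  ext x y
  simp only [redBC, redAC, redC, Finset.mul_sum]
  refine Finset.sum_congr rfl fun i _ => Finset.sum_congr rfl fun j _ => ?_
  ring

variable {ρ}

theorem posDef_redAC [NeZero dB] (hρ : ρ.PosDef) : (redAC ρ).PosDef :=
  ampliation_partialTrace_splitB ρ ▸ posDef_map _ (posDef_partialTrace _ hρ)

theorem posDef_redBC [NeZero dA] (hρ : ρ.PosDef) : (redBC ρ).PosDef :=
  ampliation_partialTrace_splitA ρ ▸ posDef_map _ (posDef_partialTrace _ hρ)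

theorem posDef_redC [NeZero dA] [NeZero dB] (hρ : ρ.PosDef) : (redC ρ).PosDef :=
  redAC_redBC ρ ▸ posDef_redAC (posDef_redBC hρ)

theorem neZero_of_trace_eq_one (h : ρ.trace = 1) : NeZero dA ∧ NeZero dB ∧ NeZero dC := by
  refine ⟨⟨?_⟩, ⟨?_⟩, ⟨?_⟩⟩ <;>
  · rintro rfl
    simp [Matrix.trace] at h

end TripartiteMarginals

section TraceInequality

open Matrix

variable {n : Type*} [Fintype n] [DecidableEq n]

theorem trace_mpow_mul_mpow_mul_conjTranspose {R : Matrix n n ℂ} (hR : R.PosDef)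
    (K : Matrix n n ℂ) (r s : ℝ) :
    (mpow R r * ((mpow R s * K) * (mpow R s * K)ᴴ)).trace =
      (mpow R (2 * s + r) * K * Kᴴ).trace := by
  calc (mpow R r * ((mpow R s * K) * (mpow R s * K)ᴴ)).trace
      = (mpow R r * (mpow R s * K * Kᴴ) * mpow R s).trace := by
        rw [conjTranspose_mul, conjTranspose_mpow hR]
        simp only [Matrix.mul_assoc]
    _ = (mpow R s * (mpow R r * (mpow R s * (K * Kᴴ)))).trace := by
        rw [trace_mul_comm]
        simp only [Matrix.mul_assoc]
    _ = (mpow R (2 * s + r) * K * Kᴴ).trace := by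
        rw [mpow_mul_mpow_mul hR, mpow_mul_mpow_mul hR, ← Matrix.mul_assoc]
        ring_nf

theorem trace_mpow {A : Matrix n n ℂ} (hA : A.IsHermitian) (t : ℝ) :
    (mpow A t).trace =
      ∑ i, ((if hA.eigenvalues i = 0 then (0 : ℝ) else hA.eigenvalues i ^ t) : ℂ) := by
  rw [mpow, dif_pos hA, trace_mul_comm, ← Matrix.mul_assoc, Unitary.coe_star_mul_self,
    Matrix.one_mul, trace_diagonal]

theorem trace_mpow_conjTranspose_mul_self (X : Matrix n n ℂ) (t : ℝ) :
    (mpow (Xᴴ * X) t).trace = (mpow (X * Xᴴ) t).trace := by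
  have heig := (IsHermitian.eigenvalues_eq_eigenvalues_iff (isHermitian_conjTranspose_mul_self X)
    (isHermitian_mul_conjTranspose_self X)).2 (charpoly_mul_comm _ _)
  rw [trace_mpow (isHermitian_conjTranspose_mul_self X),
    trace_mpow (isHermitian_mul_conjTranspose_self X), heig]

theorem bernoulli_rpow {x w : ℝ} (hx : 0 ≤ x) (hw : 0 ≤ w) :
    0 ≤ (w - 1) * (x ^ w - (1 + w * (x - 1))) := by
  have hx' : -1 ≤ x - 1 := by linarith
  rcases le_total w 1 with h | h
  · have := rpow_one_add_le_one_add_mul_self hx' hw h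
    rw [add_sub_cancel] at this
    exact mul_nonneg_of_nonpos_of_nonpos (by linarith) (by linarith)
  · have := one_add_mul_self_le_rpow_one_add hx' h
    rw [add_sub_cancel] at this
    exact mul_nonneg (by linarith) (by linarith)

theorem spectralForm_rpow_bernoulli {A : Matrix n n ℂ} (hA : A.PosDef) {w : ℝ} (hw : 0 ≤ w)
    (η : n → ℂ) :
    0 ≤ (w - 1) * (spectralForm A (· ^ w) η - (spectralForm A (· ^ (0 : ℝ)) η +
      w * (spectralForm A (· ^ (1 : ℝ)) η - spectralForm A (· ^ (0 : ℝ)) η))) := by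
  simp only [spectralForm_eq_sum hA.1, ← Finset.sum_sub_distrib, ← Finset.sum_add_distrib,
    Finset.mul_sum, Real.rpow_zero, Real.rpow_one]
  refine Finset.sum_nonneg fun k _ => ?_
  have h := mul_nonneg (Complex.normSq_nonneg
    (((hA.1.eigenvectorUnitary : Matrix n n ℂ)ᴴ *ᵥ η) k))
    (bernoulli_rpow (hA.eigenvalues_pos k).le hw)
  convert h using 1
  ring

theorem spectralForm_modularOperator_vec_mpow_half {B R : Matrix n n ℂ} (hB : B.PosDef)
    (hR : R.PosDef) (w : ℝ) :
    spectralForm (modularOperator B R) (· ^ w) (vec (mpow R (1 / 2))) =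
      (mpow R (1 - w) * mpow B w).trace.re := by
  rw [spectralForm_rpow (posDef_modularOperator hB hR),
    star_vec_dotProduct_mpow_modularOperator hB hR, conjTranspose_mpow hR, trace_mul_comm,
    Matrix.mul_assoc, mpow_mul_mpow hR, Matrix.mul_assoc, trace_mul_comm, Matrix.mul_assoc,
    mpow_mul_mpow_mul hR]
  ring_nf

theorem trace_mpow_mul_mpow_young {B R : Matrix n n ℂ} (hB : B.PosDef) (hR : R.PosDef)
    (htr : B.trace = R.trace) {w : ℝ} (hw : 0 ≤ w) :
    0 ≤ (w - 1) * ((mpow R (1 - w) * mpow B w).trace.re - R.trace.re) := by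
  have h := spectralForm_rpow_bernoulli (posDef_modularOperator hB hR) hw (vec (mpow R (1 / 2)))
  simpa only [spectralForm_modularOperator_vec_mpow_half hB hR, sub_zero, sub_self, mpow_zero hB,
    mpow_zero hR, mpow_one hB, mpow_one hR, Matrix.mul_one, Matrix.one_mul, htr, mul_zero,
    add_zero] using h

end TraceInequality

section ConditionalMutualInformation

open Matrix

variable {dA dB dC : ℕ} [NeZero dA] [NeZero dB]
  {ρ : Matrix (Fin dA × Fin dB × Fin dC) (Fin dA × Fin dB × Fin dC) ℂ}

/-- `ρ_AC^t ρ_C^{-t} ρ_BC^t`, which equals `ρ^t` for a short Markov chain. -/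
noncomputable def marginalChain
    (ρ : Matrix (Fin dA × Fin dB × Fin dC) (Fin dA × Fin dB × Fin dC) ℂ) (t : ℝ) :
    Matrix (Fin dA × Fin dB × Fin dC) (Fin dA × Fin dB × Fin dC) ℂ :=
  chainPow (redAC ρ) (redC ρ) (redBC ρ) t

theorem conjTranspose_marginalChain (hρ : ρ.PosDef) (t : ℝ) :
    (marginalChain ρ t)ᴴ = chainPow (redBC ρ) (redC ρ) (redAC ρ) t :=
  conjTranspose_chainPow (posDef_redAC hρ) (posDef_redC hρ) (posDef_redBC hρ) t

theorem isUnit_marginalChain (hρ : ρ.PosDef) (t : ℝ) : IsUnit (marginalChain ρ t) :=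
  ((posDef_mpow (posDef_redAC hρ) t).isUnit.mul (posDef_mpow (posDef_redC hρ) (-t)).isUnit).mul
    (posDef_mpow (posDef_redBC hρ) t).isUnit

theorem isShortMarkov_iff (hρ : ρ.PosDef) :
    IsShortMarkov ρ ↔ ρ = marginalChain ρ (1 / 2) * (marginalChain ρ (1 / 2))ᴴ := by
  rw [conjTranspose_marginalChain hρ, IsShortMarkov, marginalChain, chainPow, chainPow]
  conv_lhs => rw [← mpow_half_mul_mpow_half (posDef_redBC hρ)]
  simp only [Matrix.mul_assoc]

theorem IsShortMarkov.mpow_eq_marginalChain (hρ : ρ.PosDef) (h : IsShortMarkov ρ) (t : ℝ) :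
    mpow ρ t = marginalChain ρ t := by
  have hC : ampliation (splitA dA dB dC) (partialTrace (splitA dA dB dC) (redAC ρ)) = redC ρ := by
    rw [ampliation_partialTrace_splitA, redBC_redAC]
  have := mpow_eq_chainPow_of_markov (posDef_redAC hρ) hρ
    (posDef_partialTrace (splitA dA dB dC) (posDef_redAC hρ)) (posDef_partialTrace _ hρ)
    (isRestriction_partialTrace _ _) (isRestriction_partialTrace _ _)
  simp only [hC, ampliation_partialTrace_splitA] at this
  refine this ?_ t
  rwa [isShortMarkov_iff hρ, conjTranspose_marginalChain hρ] at h

theorem isShortMarkov_of_trace_le (hρ : ρ.PosDef) {t : ℝ}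
    (ht : t ∈ Set.Ioo (-(1 / 2)) (1 / 2)) (ht0 : t ≠ 0)
    (hle : 0 ≤ t * ((mpow ρ (1 - 2 * t) * marginalChain ρ t * (marginalChain ρ t)ᴴ).trace.re -
      ρ.trace.re)) : IsShortMarkov ρ := by
  have hC : ampliation (splitB dA dB dC) (partialTrace (splitB dA dB dC) (redBC ρ)) = redC ρ := by
    rw [ampliation_partialTrace_splitB, redAC_redBC]
  have := mpow_eq_chainPow_of_trace_le (posDef_redBC hρ) hρ
    (posDef_partialTrace (splitB dA dB dC) (posDef_redBC hρ)) (posDef_partialTrace _ hρ)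
    (isRestriction_partialTrace _ _) (isRestriction_partialTrace _ _) ht ht0
  simp only [hC, ampliation_partialTrace_splitB, ← conjTranspose_marginalChain hρ,
    conjTranspose_conjTranspose] at this
  have hhalf := this hle (1 / 2)
  rw [isShortMarkov_iff hρ, ← hhalf, ← conjTranspose_conjTranspose (marginalChain ρ (1 / 2)),
    ← hhalf, conjTranspose_mpow hρ, mpow_half_mul_mpow_half hρ]

theorem posDef_mpow_mul_marginalChain_mul_conjTranspose (hρ : ρ.PosDef) (s t : ℝ) :
    ((mpow ρ s * marginalChain ρ t) * (mpow ρ s * marginalChain ρ t)ᴴ).PosDef :=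
  PosDef.mul_conjTranspose_self _ <|
    vecMul_injective_of_isUnit <| (posDef_mpow hρ s).isUnit.mul (isUnit_marginalChain hρ t)

theorem IRenyi_eq_log_trace (hρ : ρ.PosDef) (α : ℝ) :
    IRenyi α ρ = (α - 1)⁻¹ * Real.log
      (mpow ρ α * marginalChain ρ ((1 - α) / 2) * (marginalChain ρ ((1 - α) / 2))ᴴ).trace.re := by
  rw [conjTranspose_marginalChain hρ, marginalChain, chainPow, chainPow, IRenyi,
    ← add_halves (1 - α), ← mpow_mul_mpow (posDef_redBC hρ), add_halves, ← neg_div, neg_sub]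
  simp only [Matrix.mul_assoc]

theorem ITilde_eq_log_trace [NeZero dC] (hρ : ρ.PosDef) {α : ℝ} (hα : α ≠ 0) :
    ITilde α ρ = (α - 1)⁻¹ * Real.log (mpow
      ((mpow ρ (1 / 2) * marginalChain ρ ((1 - α) / (2 * α))) *
        (mpow ρ (1 / 2) * marginalChain ρ ((1 - α) / (2 * α)))ᴴ) α).trace.re := by
  set X := mpow ρ (1 / 2) * marginalChain ρ ((1 - α) / (2 * α)) with hX
  have hXX : (X * Xᴴ).PosDef := posDef_mpow_mul_marginalChain_mul_conjTranspose hρ _ _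
  have hpos : 0 < (mpow (X * Xᴴ) α).trace.re :=
    (Complex.pos_iff.1 (posDef_mpow hXX α).trace_pos).1
  have hvec : ITilde α ρ = 2 * α / (α - 1) * Real.log (mnorm X (2 * α)) := by
    rw [ITilde, hX, marginalChain, chainPow, ← neg_sub 1 α, neg_div]
    simp only [Matrix.mul_assoc]
  rw [hvec, mnorm, mul_div_cancel_left₀ α two_ne_zero, trace_mpow_conjTranspose_mul_self,
    Real.log_rpow hpos]
  field_simp

theorem IsShortMarkov.IRenyi_eq_zero (hρ : ρ.PosDef) (hρ1 : ρ.trace = 1) (h : IsShortMarkov ρ)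
    (α : ℝ) : IRenyi α ρ = 0 := by
  rw [IRenyi_eq_log_trace hρ, ← h.mpow_eq_marginalChain hρ, conjTranspose_mpow hρ,
    mpow_mul_mpow hρ, mpow_mul_mpow hρ, show α + (1 - α) / 2 + (1 - α) / 2 = 1 by ring,
    mpow_one hρ, hρ1, Complex.one_re, Real.log_one, mul_zero]

theorem IsShortMarkov.ITilde_eq_zero [NeZero dC] (hρ : ρ.PosDef) (hρ1 : ρ.trace = 1)
    (h : IsShortMarkov ρ) {α : ℝ} (hα : α ≠ 0) : ITilde α ρ = 0 := by
  rw [ITilde_eq_log_trace hρ hα, ← h.mpow_eq_marginalChain hρ, mpow_mul_mpow hρ,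
    conjTranspose_mpow hρ, mpow_mul_mpow hρ, mpow_mpow hρ,
    show (1 / 2 + (1 - α) / (2 * α) + (1 / 2 + (1 - α) / (2 * α))) * α = 1 by field_simp; ring,
    mpow_one hρ, hρ1, Complex.one_re, Real.log_one, mul_zero]

theorem isShortMarkov_of_IRenyi_eq_zero [NeZero dC] (hρ : ρ.PosDef) (hρ1 : ρ.trace = 1) {α : ℝ}
    (hα : α ∈ Set.Ioo (0 : ℝ) 2) (hα1 : α ≠ 1) (h : IRenyi α ρ = 0) : IsShortMarkov ρ := by
  set t := (1 - α) / 2 with ht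
  have hαt : 1 - 2 * t = α := by ring
  have hsq := trace_mpow_mul_mpow_mul_conjTranspose hρ (marginalChain ρ t) 0 (α / 2)
  rw [mpow_zero hρ, Matrix.one_mul, add_zero, mul_div_cancel₀ α two_ne_zero] at hsq
  have hpos : 0 < (mpow ρ α * marginalChain ρ t * (marginalChain ρ t)ᴴ).trace.re :=
    hsq ▸ (Complex.pos_iff.1 (posDef_mpow_mul_marginalChain_mul_conjTranspose hρ
      (α / 2) t).trace_pos).1
  rw [IRenyi_eq_log_trace hρ, mul_eq_zero, or_iff_right (inv_ne_zero (sub_ne_zero.2 hα1))] at h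
  refine isShortMarkov_of_trace_le hρ (t := t) ⟨by linarith [hα.2], by linarith [hα.1]⟩
    (fun h0 => hα1 (by linarith)) ?_
  rw [hαt, Real.eq_one_of_pos_of_log_eq_zero hpos h, hρ1, Complex.one_re, sub_self, mul_zero]

theorem isShortMarkov_of_ITilde_eq_zero [NeZero dC] (hρ : ρ.PosDef) (hρ1 : ρ.trace = 1) {α : ℝ}
    (hα : 1 / 2 < α) (hα1 : α ≠ 1) (h : ITilde α ρ = 0) : IsShortMarkov ρ := by
  have hα0 : 0 < α := by linarith
  set t := (1 - α) / (2 * α) with ht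
  have htα : 2 * t = 1 / α - 1 := by rw [ht]; field_simp
  set X := mpow ρ (1 / 2) * marginalChain ρ t with hX
  have hXX : (X * Xᴴ).PosDef := posDef_mpow_mul_marginalChain_mul_conjTranspose hρ _ _
  have hpow := posDef_mpow hXX α
  obtain ⟨hpos, him⟩ := Complex.pos_iff.1 hpow.trace_pos
  rw [ITilde_eq_log_trace hρ hα0.ne', mul_eq_zero,
    or_iff_right (inv_ne_zero (sub_ne_zero.2 hα1))] at h
  have htr : (mpow (X * Xᴴ) α).trace = ρ.trace := by
    rw [hρ1]
    exact Complex.ext (Real.eq_one_of_pos_of_log_eq_zero hpos h) him.symm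
  have hyoung := trace_mpow_mul_mpow_young hpow hρ htr (one_div_pos.2 hα0).le
  rw [mpow_mpow hXX, mul_one_div_cancel hα0.ne', mpow_one hXX, hX,
    trace_mpow_mul_mpow_mul_conjTranspose hρ, ← htα, mul_assoc,
    show 2 * (1 / 2) + (1 - 1 / α) = 1 - 2 * t by rw [htα]; ring] at hyoung
  have hα2 : 1 / α < 2 := by rw [div_lt_iff₀ hα0]; linarith
  have hα_pos : 0 < 1 / α := one_div_pos.2 hα0
  refine isShortMarkov_of_trace_le hρ (t := t) ⟨by linarith, by linarith⟩ (fun h0 => hα1 ?_)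
    (nonneg_of_mul_nonneg_right hyoung two_pos)
  have : 1 / α = 1 := by linarith
  exact (div_eq_one_iff_eq hα0.ne').1 this |>.symm

end ConditionalMutualInformation

theorem stmt_16_general {dA dB dC : ℕ}
    (ρ : Matrix (Fin dA × Fin dB × Fin dC) (Fin dA × Fin dB × Fin dC) ℂ)
    (hρ : ρ.PosDef) (hρ1 : ρ.trace = 1) :
    (IsShortMarkov ρ → ∀ α : ℝ, α ≠ 1 → IRenyi α ρ = 0 ∧ (α ≠ 0 → ITilde α ρ = 0)) ∧
    (∀ α ∈ Set.Ioo (0 : ℝ) 2, α ≠ 1 → IRenyi α ρ = 0 → IsShortMarkov ρ) ∧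
    (∀ α ∈ Set.Ioi (1 / 2 : ℝ), α ≠ 1 → ITilde α ρ = 0 → IsShortMarkov ρ) := by
  obtain ⟨_, _, _⟩ := neZero_of_trace_eq_one hρ1
  exact ⟨fun h α _ => ⟨h.IRenyi_eq_zero hρ hρ1 α, h.ITilde_eq_zero hρ hρ1⟩,
    fun _ => isShortMarkov_of_IRenyi_eq_zero hρ hρ1,
    fun _ => isShortMarkov_of_ITilde_eq_zero hρ hρ1⟩

theorem stmt_16 {dA dB dC : ℕ}
    (ρ : Matrix (Fin dA × Fin dB × Fin dC) (Fin dA × Fin dB × Fin dC) ℂ)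
    (hρ : ρ.PosDef) (hρ1 : ρ.trace = 1) :
    (IsShortMarkov ρ →
      ∀ α : ℝ, α ∈ Set.Ioo (0:ℝ) 1 ∪ Set.Ioi (1:ℝ) →
        IRenyi α ρ = 0 ∧ ITilde α ρ = 0) ∧
    (∀ α : ℝ, α ∈ Set.Ioo (0:ℝ) 1 ∪ Set.Ioo (1:ℝ) 2 →
        IRenyi α ρ = 0 → IsShortMarkov ρ) ∧
    (∀ α : ℝ, α ∈ Set.Ioo (1/2 : ℝ) 1 ∪ Set.Ioi (1:ℝ) →
        ITilde α ρ = 0 → IsShortMarkov ρ) := by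
  obtain ⟨hzero, hIRenyi, hITilde⟩ := stmt_16_general ρ hρ hρ1
  refine ⟨fun h α hα => ?_, fun α hα => hIRenyi α ?_ ?_, fun α hα => hITilde α ?_ ?_⟩
  · have hα1 : α ≠ 1 := by grind
    exact (hzero h α hα1).imp_right (· (by grind))
  all_goals grind
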